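/- arXiv:0711.3073 — 3 statements merged into one kernel-verified Lean document; each statement's English description precedes it below -/
import Mathlib

section
/- Let q ∈ ℝ, let H be a complex Hilbert space with orthonormal basis (e_n)_{n∈ℤ}, let (τ_n)_{n∈ℤ} be nonnegative reals, and let T be the bilateral weighted shift with domain D := span{e_n : n ∈ ℤ} given by T e_n = τ_n e_{n+1} (so T* e_n = τ_{n−1} e_{n−1}). Then T* T f − q T T* f = f for all f ∈ D if and only if τ_n² = 1 + q τ_{n−1}² for all n ∈ ℤ. Consequently: (a) if q < 0 and q ≠ −1, then necessarily τ_n = (1 − q)^{−1/2} for all n ∈ ℤ (so T is normal); (b) if 0 ≤ q < 1, then necessarily τ_0² ≥ (1 − q)^{−1}; (c) if q ≥ 1, then no such family of nonnegative weights exists. -/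
noncomputable section

/-!
On the span `D` of the basis, `T` and `T*` restrict to endomorphisms `S` and `A` of `D`, where
`A e_n = τ_{n-1} e_{n-1}`. Hence the relation says that `A S - q S A = 1` on `D`, and as
`A S - q S A` is diagonal with entries `τ_n² - q τ_{n-1}²`, this is the recurrence
`x_n = 1 + q x_{n-1}` for `x_n = τ_n²`.

No iteration is needed to solve the recurrence. If `q < 0`, then `0 ≤ x_n ≤ 1`, and the bounded
family `y_n = x_n - (1 - q)⁻¹` satisfies `y_n = q y_{n-1}`, so `sup |y| = |q| sup |y|`, and `y = 0`
unless `|q| = 1`. If `q ≥ 0`, then `m = inf x ≥ 0` satisfies `1 + q m ≤ m`, which is a lower bound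
`(1 - q)⁻¹ ≤ m` for `q < 1` and impossible for `q ≥ 1`.
-/

section Recurrence

variable {ι : Type*}

lemma eq_zero_of_bddAbove_norm_of_forall_eq_smul {𝕜 E : Type*} [NormedField 𝕜]
    [NormedAddCommGroup E] [NormedSpace 𝕜 E] (σ : Equiv.Perm ι) {q : 𝕜} (hq : ‖q‖ ≠ 1) {y : ι → E}
    (hbdd : BddAbove (Set.range fun i => ‖y i‖)) (hy : ∀ i, y i = q • y (σ i)) (i : ι) :
    y i = 0 := by
  have hsup : ⨆ i, ‖y i‖ = ‖q‖ * ⨆ i, ‖y i‖ := calc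
    ⨆ i, ‖y i‖ = ⨆ i, ‖q‖ * ‖y (σ i)‖ := iSup_congr fun i => by rw [← norm_smul, ← hy]
    _ = ‖q‖ * ⨆ i, ‖y (σ i)‖ := (Real.mul_iSup_of_nonneg (norm_nonneg q) _).symm
    _ = ‖q‖ * ⨆ i, ‖y i‖ := by rw [σ.iSup_comp (g := fun i => ‖y i‖)]
  have hsup_zero : ⨆ i, ‖y i‖ = 0 := by
    by_contra hne
    exact hq ((mul_eq_right₀ hne).mp hsup.symm)
  exact norm_le_zero_iff.mp (hsup_zero ▸ le_ciSup hbdd i)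

variable {q : ℝ} {x : ι → ℝ}

lemma eq_inv_of_forall_eq_one_add_mul_of_neg (σ : Equiv.Perm ι) (hq : q < 0) (hq' : q ≠ -1)
    (hx0 : ∀ i, 0 ≤ x i) (hx : ∀ i, x i = 1 + q * x (σ i)) (i : ι) : x i = (1 - q)⁻¹ := by
  have hx1 (i : ι) : x i ≤ 1 := by
    linarith [hx i, mul_nonpos_of_nonpos_of_nonneg hq.le (hx0 (σ i))]
  have hbdd : BddAbove (Set.range fun i => ‖x i - (1 - q)⁻¹‖) := by
    refine ⟨1 + ‖(1 - q)⁻¹‖, Set.forall_mem_range.mpr fun i => (norm_sub_le _ _).trans ?_⟩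
    gcongr
    exact (Real.norm_of_nonneg (hx0 i)).trans_le (hx1 i)
  have hfixed : (1 - q)⁻¹ = 1 + q * (1 - q)⁻¹ := by
    have : 1 - q ≠ 0 := by linarith
    field_simp
    ring
  have hnorm : ‖q‖ ≠ 1 := by
    rw [Real.norm_of_nonpos hq.le]
    exact fun h => hq' (by linarith)
  refine sub_eq_zero.mp (eq_zero_of_bddAbove_norm_of_forall_eq_smul σ hnorm hbdd (fun i => ?_) i)
  rw [smul_eq_mul]
  linear_combination hx i - hfixed

lemma one_add_mul_iInf_le_iInf [Nonempty ι] (f : ι → ι) (hq : 0 ≤ q)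
    (hbdd : BddBelow (Set.range x)) (hx : ∀ i, 1 + q * x (f i) ≤ x i) :
    1 + q * ⨅ i, x i ≤ ⨅ i, x i :=
  le_ciInf fun i => le_trans (by gcongr; exact ciInf_le hbdd (f i)) (hx i)

lemma inv_le_of_forall_one_add_mul_le (f : ι → ι) (hq : 0 ≤ q) (hq' : q < 1)
    (hbdd : BddBelow (Set.range x)) (hx : ∀ i, 1 + q * x (f i) ≤ x i) (i : ι) :
    (1 - q)⁻¹ ≤ x i := by
  have : Nonempty ι := ⟨i⟩
  have hinf := one_add_mul_iInf_le_iInf f hq hbdd hx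
  refine le_trans ?_ (ciInf_le hbdd i)
  rw [inv_le_iff_one_le_mul₀ (sub_pos.mpr hq')]
  linarith

lemma not_forall_one_add_mul_le_of_one_le [Nonempty ι] (f : ι → ι) (hq : 1 ≤ q)
    (hx0 : ∀ i, 0 ≤ x i) : ¬ ∀ i, 1 + q * x (f i) ≤ x i := by
  intro hx
  have hinf := one_add_mul_iInf_le_iInf f (by linarith) ⟨0, Set.forall_mem_range.mpr hx0⟩ hx
  linarith [le_mul_of_one_le_left (Real.iInf_nonneg hx0) hq]

end Recurrence

section QOscillator

variable {𝕜 H : Type*} [RCLike 𝕜] [NormedAddCommGroup H] [InnerProductSpace 𝕜 H] [CompleteSpace H]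

/-- The `q`-oscillator relation `T* T f - q T T* f = f` for all `f` in the domain of the partially
defined operator `T`. That `T* T f` and `T T* f` are defined is part of the relation. -/
def IsQOscillator (q : 𝕜) (T : H →ₗ.[𝕜] H) : Prop :=
  ∀ f (hf : f ∈ T.domain),
    ∃ (h1 : T ⟨f, hf⟩ ∈ T.adjoint.domain) (h2 : f ∈ T.adjoint.domain)
      (h3 : T.adjoint ⟨f, h2⟩ ∈ T.domain),
      T.adjoint ⟨T ⟨f, hf⟩, h1⟩ - q • T ⟨T.adjoint ⟨f, h2⟩, h3⟩ = f

variable {T : H →ₗ.[𝕜] H} {S A : Module.End 𝕜 T.domain}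

lemma isQOscillator_iff_mul_sub_smul_mul_eq_one (q : 𝕜) (hT : Dense (T.domain : Set H))
    (hS : ∀ f, T f = S f) (hA : ∀ f g, inner 𝕜 (S f) g = inner 𝕜 f (A g)) :
    IsQOscillator q T ↔ A * S - q • (S * A) = 1 := by
  have hformal : T.IsFormalAdjoint ⟨T.domain, T.domain.subtype ∘ₗ A⟩ := fun f g =>
    (congrArg (inner 𝕜 · (g : H)) (hS f)).trans (hA f g)
  obtain ⟨hle, happly⟩ := hformal.le_adjoint hT
  have hmem (f : T.domain) : (f : H) ∈ T.adjoint.domain := hle f.2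
  have hadj (f : T.domain) : T.adjoint ⟨f, hmem f⟩ = A f := (happly (x := f) rfl).symm
  have hrel (f : T.domain) :
      (∃ (h1 : T f ∈ T.adjoint.domain) (h2 : (f : H) ∈ T.adjoint.domain)
        (h3 : T.adjoint ⟨f, h2⟩ ∈ T.domain),
        T.adjoint ⟨T f, h1⟩ - q • T ⟨T.adjoint ⟨f, h2⟩, h3⟩ = f) ↔
      A (S f) - q • S (A f) = f := by
    simp only [hS, hadj, hmem, Subtype.coe_eta, SetLike.coe_mem, exists_true_left, Subtype.ext_iff,
      Submodule.coe_sub, Submodule.coe_smul]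
  rw [LinearMap.ext_iff]
  exact Subtype.forall.symm.trans (forall_congr' hrel)

end QOscillator

section WeightedShift

variable {ι R M : Type*} [CommSemiring R] [AddCommMonoid M] [Module R M]

/-- The weighted shift `b i ↦ τ i • b (σ i)` on a module with basis `b`. The bilateral weighted
shift is the case of the permutation `σ n = n + 1` of `ℤ`. -/
def weightedShift (b : Module.Basis ι R M) (σ : ι → ι) (τ : ι → R) : Module.End R M :=
  b.constr R fun i => τ i • b (σ i)

lemma weightedShift_apply_basis (b : Module.Basis ι R M) (σ : ι → ι) (τ : ι → R) (i : ι) :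
    weightedShift b σ τ (b i) = τ i • b (σ i) :=
  b.constr_basis R _ i

lemma weightedShift_mul_sub_smul_mul_eq_one_iff {𝕜 E : Type*} [RCLike 𝕜] [AddCommGroup E]
    [Module 𝕜 E] (b : Module.Basis ι 𝕜 E) (σ : Equiv.Perm ι) (τ : ι → 𝕜) (q : ℝ) :
    weightedShift b σ.symm (star (τ ∘ σ.symm)) * weightedShift b σ τ -
        (q : 𝕜) • (weightedShift b σ τ * weightedShift b σ.symm (star (τ ∘ σ.symm))) = 1 ↔
      ∀ i, ‖τ i‖ ^ 2 = 1 + q * ‖τ (σ.symm i)‖ ^ 2 := by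
  have hdiag (i : ι) : (weightedShift b σ.symm (star (τ ∘ σ.symm)) * weightedShift b σ τ -
      (q : 𝕜) • (weightedShift b σ τ * weightedShift b σ.symm (star (τ ∘ σ.symm)))) (b i) =
        ((‖τ i‖ ^ 2 - q * ‖τ (σ.symm i)‖ ^ 2 : ℝ) : 𝕜) • b i := by
    simp only [LinearMap.sub_apply, LinearMap.smul_apply, Module.End.mul_apply,
      weightedShift_apply_basis, map_smul, smul_smul, Equiv.symm_apply_apply,
      Equiv.apply_symm_apply, ← sub_smul, Pi.star_apply, Function.comp_apply]
    push_cast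
    simp only [← RCLike.mul_conj, starRingEnd_apply, mul_comm]
  have hentry (i : ι) : ((‖τ i‖ ^ 2 - q * ‖τ (σ.symm i)‖ ^ 2 : ℝ) : 𝕜) • b i = b i ↔
      ‖τ i‖ ^ 2 = 1 + q * ‖τ (σ.symm i)‖ ^ 2 := by
    rw [(smul_left_injective 𝕜 (b.ne_zero i)).eq_iff' (one_smul 𝕜 _), ← RCLike.ofReal_one,
      RCLike.ofReal_inj, sub_eq_iff_eq_add]
  simp only [← hentry, ← hdiag]
  exact ⟨fun h i => LinearMap.congr_fun h (b i), fun h => b.ext h⟩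

end WeightedShift

section InnerProductSpace

variable {ι 𝕜 E : Type*} [RCLike 𝕜] [NormedAddCommGroup E] [InnerProductSpace 𝕜 E]

lemma inner_weightedShift_left {b : Module.Basis ι 𝕜 E} (hb : Orthonormal 𝕜 b) (σ : Equiv.Perm ι)
    (τ : ι → 𝕜) (x y : E) :
    inner 𝕜 (weightedShift b σ τ x) y =
      inner 𝕜 x (weightedShift b σ.symm (star (τ ∘ σ.symm)) y) := by
  classical
  suffices h : (innerₛₗ 𝕜).comp (weightedShift b σ τ) =
      (innerₛₗ 𝕜).compl₂ (weightedShift b σ.symm (star (τ ∘ σ.symm))) from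
    LinearMap.congr_fun₂ h x y
  refine LinearMap.ext_basis b b fun i j => ?_
  simp only [LinearMap.comp_apply, LinearMap.compl₂_apply, innerₛₗ_apply_apply,
    weightedShift_apply_basis, inner_smul_left, inner_smul_right, orthonormal_iff_ite.mp hb,
    Equiv.eq_symm_apply, starRingEnd_apply, Pi.star_apply, Function.comp_apply]
  split_ifs with h
  · rw [← h, σ.symm_apply_apply]
  · rw [mul_zero, mul_zero]

end InnerProductSpace

section SpanDomain

variable {ι 𝕜 H : Type*} [RCLike 𝕜] [NormedAddCommGroup H] [InnerProductSpace 𝕜 H]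

lemma exists_orthonormal_basis_of_eq_span {v : ι → H} (hv : Orthonormal 𝕜 v) {D : Submodule 𝕜 H}
    (hD : D = Submodule.span 𝕜 (Set.range v)) :
    ∃ b : Module.Basis ι 𝕜 D, Orthonormal 𝕜 b ∧ ∀ i, (b i : H) = v i := by
  subst hD
  have hb (i : ι) : (Module.Basis.span hv.linearIndependent i : H) = v i :=
    Module.Basis.coe_span_apply _ i
  refine ⟨Module.Basis.span hv.linearIndependent, ?_, hb⟩
  rw [← (Submodule.subtypeₗᵢ _).orthonormal_comp_iff]
  exact (congrArg (Orthonormal 𝕜) (funext hb)).mpr hv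

variable [CompleteSpace H]

lemma isQOscillator_iff_of_basis (q : ℝ) {T : H →ₗ.[𝕜] H} (hT : Dense (T.domain : Set H))
    {b : Module.Basis ι 𝕜 T.domain} (hb : Orthonormal 𝕜 b) (σ : Equiv.Perm ι) {τ : ι → 𝕜}
    (hval : ∀ i, T (b i) = τ i • (b (σ i) : H)) :
    IsQOscillator (q : 𝕜) T ↔ ∀ i, ‖τ i‖ ^ 2 = 1 + q * ‖τ (σ.symm i)‖ ^ 2 := by
  have hshift : T.toFun = T.domain.subtype ∘ₗ weightedShift b σ τ := b.ext fun i => by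
    rw [LinearMap.comp_apply, weightedShift_apply_basis]
    exact hval i
  rw [isQOscillator_iff_mul_sub_smul_mul_eq_one (q : 𝕜) hT (LinearMap.congr_fun hshift)
    (inner_weightedShift_left hb σ τ), weightedShift_mul_sub_smul_mul_eq_one_iff]

lemma isQOscillator_iff_of_domain_eq_span (q : ℝ) (e : HilbertBasis ι 𝕜 H) (σ : Equiv.Perm ι)
    {τ : ι → 𝕜} {T : H →ₗ.[𝕜] H} (hdom : T.domain = Submodule.span 𝕜 (Set.range e))
    (hval : ∀ (i : ι) (hi : e i ∈ T.domain), T ⟨e i, hi⟩ = τ i • e (σ i)) :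
    IsQOscillator (q : 𝕜) T ↔ ∀ i, ‖τ i‖ ^ 2 = 1 + q * ‖τ (σ.symm i)‖ ^ 2 := by
  have hT : Dense (T.domain : Set H) := by
    rw [hdom]
    exact Submodule.dense_iff_topologicalClosure_eq_top.mpr e.dense_span
  obtain ⟨b, hb, hbe⟩ := exists_orthonormal_basis_of_eq_span e.orthonormal hdom
  refine isQOscillator_iff_of_basis q hT hb σ fun i => ?_
  rw [hbe, ← hval i (hbe i ▸ (b i).2)]
  exact congrArg T (Subtype.ext (hbe i))

end SpanDomain

theorem stmt6_general {ι 𝕜 H : Type*} [Nonempty ι] [RCLike 𝕜] [NormedAddCommGroup H]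
    [InnerProductSpace 𝕜 H] [CompleteSpace H] (q : ℝ) (e : HilbertBasis ι 𝕜 H)
    (σ : Equiv.Perm ι) (τ : ι → 𝕜) (T : H →ₗ.[𝕜] H)
    (hdom : T.domain = Submodule.span 𝕜 (Set.range e))
    (hval : ∀ (i : ι) (hi : e i ∈ T.domain), T ⟨e i, hi⟩ = τ i • e (σ i)) :
    (IsQOscillator (q : 𝕜) T ↔ ∀ i, ‖τ i‖ ^ 2 = 1 + q * ‖τ (σ.symm i)‖ ^ 2) ∧
    (q < 0 → q ≠ -1 → (∀ i, ‖τ i‖ ^ 2 = 1 + q * ‖τ (σ.symm i)‖ ^ 2) →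
      ∀ i, ‖τ i‖ = (Real.sqrt (1 - q))⁻¹) ∧
    (0 ≤ q → q < 1 → (∀ i, ‖τ i‖ ^ 2 = 1 + q * ‖τ (σ.symm i)‖ ^ 2) →
      ∀ i, (1 - q)⁻¹ ≤ ‖τ i‖ ^ 2) ∧
    (1 ≤ q → ¬ ∀ i, ‖τ i‖ ^ 2 = 1 + q * ‖τ (σ.symm i)‖ ^ 2) := by
  have hnonneg (i : ι) : 0 ≤ ‖τ i‖ ^ 2 := sq_nonneg _
  refine ⟨isQOscillator_iff_of_domain_eq_span q e σ hdom hval, fun hq hq' h i => ?_,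
    fun hq hq' h => ?_, fun hq h => ?_⟩
  · rw [← Real.sqrt_inv, ← eq_inv_of_forall_eq_one_add_mul_of_neg σ.symm hq hq' hnonneg h i,
      Real.sqrt_sq (norm_nonneg _)]
  · exact inv_le_of_forall_one_add_mul_le σ.symm hq hq' ⟨0, Set.forall_mem_range.mpr hnonneg⟩
      fun i => (h i).ge
  · exact not_forall_one_add_mul_le_of_one_le σ.symm hq hnonneg fun i => (h i).ge

/-- Let `T` be the bilateral weighted shift `T e n = τ n • e (n+1)` with
nonnegative weights, with domain the span of an orthonormal basis `(e n)_{n ∈ ℤ}`. Then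
`T* T f - q T T* f = f` on the span iff `τ n ^ 2 = 1 + q * τ (n-1) ^ 2` for all `n : ℤ`.
Consequently: (a) if `q < 0`, `q ≠ -1`, the weights are constant `= (1-q)^{-1/2}`;
(b) if `0 ≤ q < 1` then `τ 0 ^ 2 ≥ (1-q)⁻¹`; (c) if `q ≥ 1` no such weights exist. -/
theorem stmt6 (q : ℝ) {H : Type*} [NormedAddCommGroup H] [InnerProductSpace ℂ H]
    [CompleteSpace H] (e : HilbertBasis ℤ ℂ H) (τ : ℤ → ℝ) (hτ : ∀ n, 0 ≤ τ n)
    (T : H →ₗ.[ℂ] H)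
    (hdom : T.domain = Submodule.span ℂ (Set.range (e : ℤ → H)))
    (hval : ∀ (n : ℤ) (hn : e n ∈ T.domain), T ⟨e n, hn⟩ = (τ n : ℂ) • e (n + 1)) :
    ((∀ f (hf : f ∈ T.domain),
        ∃ (h1 : (T ⟨f, hf⟩ : H) ∈ T.adjoint.domain) (h2 : f ∈ T.adjoint.domain)
          (h3 : (T.adjoint ⟨f, h2⟩ : H) ∈ T.domain),
          (T.adjoint ⟨T ⟨f, hf⟩, h1⟩ : H) - (q : ℂ) • (T ⟨T.adjoint ⟨f, h2⟩, h3⟩ : H) = f) ↔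
      (∀ n : ℤ, τ n ^ 2 = 1 + q * τ (n - 1) ^ 2)) ∧
    (q < 0 → q ≠ -1 → (∀ n : ℤ, τ n ^ 2 = 1 + q * τ (n - 1) ^ 2) →
      ∀ n : ℤ, τ n = (Real.sqrt (1 - q))⁻¹) ∧
    (0 ≤ q → q < 1 → (∀ n : ℤ, τ n ^ 2 = 1 + q * τ (n - 1) ^ 2) →
      (1 - q)⁻¹ ≤ τ 0 ^ 2) ∧
    (1 ≤ q → ¬ (∀ n : ℤ, τ n ^ 2 = 1 + q * τ (n - 1) ^ 2)) := by
  have hnorm (n : ℤ) : ‖(τ n : ℂ)‖ = τ n := Complex.norm_of_nonneg (hτ n)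
  obtain ⟨hrel, ha, hb, hc⟩ := stmt6_general q e (Equiv.addRight 1) (fun n => (τ n : ℂ)) T hdom hval
  simp only [hnorm, Equiv.addRight_symm, Equiv.coe_addRight, ← sub_eq_add_neg] at hrel ha hb hc
  exact ⟨hrel, ha, fun hq hq' h => hb hq hq' h 0, hc⟩
end
end

section
/- Let 0 ≤ q < 1 and let S be a densely defined operator in a complex Hilbert space H satisfying (O_{q,D}) on a dense subspace D with S D ⊆ D and S* D ⊆ D and with D a core of S. Then the following are equivalent: (i) ‖S f‖ ≤ (1 − q)^{−1/2} ‖f‖ for all f ∈ dom S; (ii) S is bounded, i.e. there is M ≥ 0 with ‖S f‖ ≤ M ‖f‖ for all f ∈ dom S; (iii) S is subnormal; (iv) ‖S* f‖ ≤ ‖S f‖ for all f ∈ D. -/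
noncomputable section

universe u v

variable {H : Type u} [NormedAddCommGroup H] [InnerProductSpace ℂ H] [CompleteSpace H]

/-- `S` satisfies the commutation relation `(O_{q,D})` on the dense subspace `D`. -/
structure SatOqD (q : ℝ) (S : H →ₗ.[ℂ] H) (D : Submodule ℂ H) : Prop where
  denseDom : Dense (S.domain : Set H)
  denseD : Dense (D : Set H)
  closable : S.IsClosable
  memC : ∀ f, f ∈ D → f ∈ S.closure.domain
  memCA : ∀ f (hf : f ∈ D), (S.closure ⟨f, memC f hf⟩ : H) ∈ S.adjoint.domain
  memA : ∀ f, f ∈ D → f ∈ S.adjoint.domain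
  memAC : ∀ f (hf : f ∈ D), (S.adjoint ⟨f, memA f hf⟩ : H) ∈ S.closure.domain
  eqn : ∀ f (hf : f ∈ D),
    (S.adjoint ⟨S.closure ⟨f, memC f hf⟩, memCA f hf⟩ : H)
      - (q : ℂ) • (S.closure ⟨S.adjoint ⟨f, memA f hf⟩, memAC f hf⟩ : H) = f

/-- `D` is a core of the closable operator `S`. -/
def IsCoreOf (S : H →ₗ.[ℂ] H) (D : Submodule ℂ H) : Prop :=
  D ≤ S.domain ∧ (S.domRestrict D).closure = S.closure

/-- A densely defined operator `N` in a Hilbert space is *normal* if it is formally normal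
with `dom N = dom N*`. -/
structure IsNormalPMap {K : Type*} [NormedAddCommGroup K] [InnerProductSpace ℂ K]
    [CompleteSpace K] (N : K →ₗ.[ℂ] K) : Prop where
  dense : Dense (N.domain : Set K)
  dom_eq : N.domain = N.adjoint.domain
  norm_eq : ∀ f (hf : f ∈ N.domain), ‖N ⟨f, hf⟩‖ = ‖N.adjoint ⟨f, dom_eq ▸ hf⟩‖

/-- `B` (acting in `K`) extends `A` (acting in `H`), where `H` is embedded in `K` via `ι`. -/
def ExtendsVia {K : Type*} [NormedAddCommGroup K] [InnerProductSpace ℂ K] [CompleteSpace K]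
    (ι : H →ₗᵢ[ℂ] K) (A : H →ₗ.[ℂ] H) (B : K →ₗ.[ℂ] K) : Prop :=
  ∀ f (hf : f ∈ A.domain), ∃ hB : ι f ∈ B.domain, B ⟨ι f, hB⟩ = ι (A ⟨f, hf⟩)

/-- The data of a normal extension of `A`. -/
structure NormalExtension (A : H →ₗ.[ℂ] H) where
  K : Type v
  [nK : NormedAddCommGroup K]
  [iK : InnerProductSpace ℂ K]
  [cK : CompleteSpace K]
  ι : H →ₗᵢ[ℂ] K
  N : K →ₗ.[ℂ] K
  normal : IsNormalPMap N
  ext : ExtendsVia ι A N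

/-- A densely defined operator is *subnormal* if it admits a normal extension. -/
def IsSubnormalPMap (A : H →ₗ.[ℂ] H) : Prop :=
  Dense (A.domain : Set H) ∧ Nonempty (NormalExtension.{u, v} A)

/-!
Write `T` for the bounded extension of `S` when `S` is bounded. The relation gives
`T* T = 1 + q T T*`, so the self-commutator `C = T* T - T T* = 1 - (1 - q) T T*` is nonnegative and
`C T = q T C`. Its square root `R` then satisfies `R T = √q T R`, and with the `q`-integers
`[n] = 1 + q + ⋯ + q ^ (n - 1)` the bidiagonal operator
`(fₙ) ↦ (√q ^ n T fₙ + √[n + 1] R fₙ₊₁)` on `ℓ²(ℕ, H)` is normal and extends `T`.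
Conversely, compressing the adjoint of a normal extension to `H` shows `‖S* f‖ ≤ ‖S f‖`, which turns
`‖S f‖² = ‖f‖² + q ‖S* f‖²` into `(1 - q) ‖S f‖² ≤ ‖f‖²` on the core `D`.
-/

open ContinuousLinearMap (adjoint)

section Intertwining

variable {A : Type*} [NonUnitalCStarAlgebra A] [PartialOrder A] [StarOrderedRing A] {r s x y : A}

theorem mul_eq_zero_of_star_mul_mul_eq_zero (hr : 0 ≤ r) (h : star y * r * y = 0) : r * y = 0 := by
  have hsqrt : CFC.sqrt r * CFC.sqrt r = r := CFC.sqrt_mul_sqrt_self r hr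
  have hsa : star (CFC.sqrt r) = CFC.sqrt r :=
    (IsSelfAdjoint.of_nonneg (CFC.sqrt_nonneg r)).star_eq
  have hy : CFC.sqrt r * y = 0 := by
    rw [← CStarRing.star_mul_self_eq_zero_iff, star_mul, hsa, mul_assoc, ← mul_assoc _ _ y, hsqrt,
      ← mul_assoc, h]
  rw [← hsqrt, mul_assoc, hy, mul_zero]

theorem mul_eq_zero_of_mul_eq_neg_mul (hr : 0 ≤ r) (hs : 0 ≤ s) (h : r * y = -(y * s)) :
    r * y = 0 := by
  have hstar : star y * r = -(s * star y) := by
    simpa [(IsSelfAdjoint.of_nonneg hr).star_eq, (IsSelfAdjoint.of_nonneg hs).star_eq]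
      using congr_arg star h
  have hright : star y * r * y = -(star y * y * s) := by rw [mul_assoc, h, mul_neg, mul_assoc]
  have hleft : star y * r * y = -(s * (star y * y)) := by rw [hstar, neg_mul, mul_assoc]
  have hcomm : Commute (star y * y) s := neg_injective (hright.symm.trans hleft)
  refine mul_eq_zero_of_star_mul_mul_eq_zero hr (le_antisymm ?_ (star_left_conjugate_nonneg hr y))
  rw [hright, neg_nonpos]
  exact hcomm.mul_nonneg (star_mul_self_nonneg y) hs

theorem semiconjBy_of_semiconjBy_mul_self (hr : 0 ≤ r) (hs : 0 ≤ s)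
    (h : SemiconjBy x (s * s) (r * r)) : SemiconjBy x s r := by
  obtain ⟨y, hy⟩ : ∃ y, y = r * x - x * s := ⟨_, rfl⟩
  have hanti : r * y = -(y * s) := by
    rw [hy, mul_sub, sub_mul, ← mul_assoc, ← h.eq]
    noncomm_ring
  have hry : r * y = 0 := mul_eq_zero_of_mul_eq_neg_mul hr hs hanti
  have hys : y * s = 0 := neg_eq_zero.1 (hanti.symm.trans hry)
  have hsq : y * star y = y * star x * r := by
    nth_rewrite 2 [hy]
    rw [star_sub, star_mul, star_mul, (IsSelfAdjoint.of_nonneg hr).star_eq,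
      (IsSelfAdjoint.of_nonneg hs).star_eq, mul_sub, ← mul_assoc, ← mul_assoc, hys, zero_mul,
      sub_zero]
  have hcube : star y * y * (star y * y) = 0 := by
    rw [mul_assoc, ← mul_assoc y, hsq, mul_assoc _ r, hry, mul_zero, mul_zero]
  have hyy : star y * y = 0 := by
    rw [← CStarRing.star_mul_self_eq_zero_iff, star_mul, star_star, hcube]
  have hy0 : y = 0 := CStarRing.star_mul_self_eq_zero_iff y |>.1 hyy
  exact (sub_eq_zero.1 (hy.symm.trans hy0)).symm

end Intertwining

section SelfCommutator

theorem selfCommutator_mul_self {R A : Type*} [CommRing R] [Ring A] [Star A] [Algebra R A] {q : R}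
    {t : A} (ht : star t * t = 1 + q • (t * star t)) :
    (star t * t - t * star t) * t = t * (q • (star t * t - t * star t)) := by
  have hC : star t * t - t * star t = 1 - (1 - q) • (t * star t) := by rw [ht]; module
  rw [hC, sub_mul, mul_smul_comm, mul_sub, smul_mul_assoc, mul_assoc, ht]
  simp only [mul_add, mul_smul_comm, mul_one, one_mul]
  module

theorem one_sub_mul_norm_sq_le_one {A : Type*} [NormedRing A] [StarRing A] [CStarRing A]
    [NormedSpace ℝ A] {q : ℝ} {t : A} (hq : 0 ≤ q)
    (ht : star t * t = 1 + q • (t * star t)) : (1 - q) * ‖t‖ ^ 2 ≤ 1 := by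
  have hone : ‖(1 : A)‖ ≤ 1 := by
    rcases subsingleton_or_nontrivial A with _ | _
    · simp [Subsingleton.elim (1 : A) 0]
    · exact CStarRing.norm_one.le
  have h : ‖t‖ * ‖t‖ ≤ 1 + q * (‖t‖ * ‖t‖) :=
    calc ‖t‖ * ‖t‖ = ‖1 + q • (t * star t)‖ := by rw [← ht, CStarRing.norm_star_mul_self]
      _ ≤ ‖(1 : A)‖ + ‖q • (t * star t)‖ := norm_add_le _ _
      _ ≤ 1 + q * (‖t‖ * ‖t‖) := by
        rw [norm_smul, Real.norm_of_nonneg hq, CStarRing.norm_self_mul_star]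
        gcongr
  linarith

variable {A : Type*} [CStarAlgebra A] [PartialOrder A] [StarOrderedRing A] {q : ℝ} {t : A}

theorem selfCommutator_nonneg (hq0 : 0 ≤ q) (hq1 : q ≤ 1)
    (ht : star t * t = 1 + q • (t * star t)) : 0 ≤ star t * t - t * star t := by
  have hnonneg : 0 ≤ (1 - q) • (t * star t) :=
    smul_nonneg (sub_nonneg.2 hq1) (mul_star_self_nonneg t)
  have hle : (1 - q) • (t * star t) ≤ 1 := by
    rw [← CStarAlgebra.norm_le_one_iff_of_nonneg _ hnonneg, norm_smul,
      Real.norm_of_nonneg (sub_nonneg.2 hq1), CStarRing.norm_self_mul_star, ← pow_two]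
    exact one_sub_mul_norm_sq_le_one hq0 ht
  calc 0 ≤ 1 - (1 - q) • (t * star t) := sub_nonneg.2 hle
    _ = star t * t - t * star t := by rw [ht]; module

theorem exists_sqrt_selfCommutator (hq0 : 0 ≤ q) (hq1 : q ≤ 1)
    (ht : star t * t = 1 + q • (t * star t)) :
    ∃ r : A, 0 ≤ r ∧ star t * t = t * star t + r * r ∧ r * t = √q • (t * r) := by
  set c := star t * t - t * star t with hc
  have hsqrt : CFC.sqrt c * CFC.sqrt c = c :=
    CFC.sqrt_mul_sqrt_self c (selfCommutator_nonneg hq0 hq1 ht)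
  have hr := CFC.sqrt_nonneg c
  have hsemi : SemiconjBy t ((√q • CFC.sqrt c) * (√q • CFC.sqrt c))
      (CFC.sqrt c * CFC.sqrt c) := by
    rw [smul_mul_smul_comm, Real.mul_self_sqrt hq0, hsqrt]
    exact (selfCommutator_mul_self ht).symm
  refine ⟨CFC.sqrt c, hr, by rw [hsqrt, hc, add_sub_cancel], ?_⟩
  rw [← mul_smul_comm]
  exact (semiconjBy_of_semiconjBy_mul_self hr (smul_nonneg (Real.sqrt_nonneg q) hr) hsemi).symm

end SelfCommutator

section Bidiagonal

/-- The backward shift `(fₙ) ↦ (fₙ₊₁)` on `ℓ²(ℕ, E)`. -/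
def backwardShift (𝕜 E : Type*) [NormedField 𝕜] [NormedAddCommGroup E] [NormedSpace 𝕜 E] :
    lp (fun _ : ℕ => E) 2 →L[𝕜] lp (fun _ : ℕ => E) 2 :=
  have summable_sq (f : lp (fun _ : ℕ => E) 2) : Summable fun n => ‖f n‖ ^ (2 : ENNReal).toReal :=
    (lp.memℓp f).summable (by norm_num)
  LinearMap.mkContinuous
    { toFun := fun f =>
        ⟨fun n => f (n + 1), memℓp_gen ((summable_nat_add_iff 1).2 (summable_sq f))⟩
      map_add' := fun _ _ => rfl
      map_smul' := fun _ _ => rfl }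
    1 fun f => by
      rw [one_mul]
      refine lp.norm_le_of_tsum_le (by norm_num) (norm_nonneg f) ?_
      rw [lp.norm_rpow_eq_tsum (by norm_num) f, (summable_sq f).tsum_eq_zero_add]
      exact le_add_of_nonneg_left (by positivity)

section Normed

variable {𝕜 E : Type*} [NontriviallyNormedField 𝕜] [NormedAddCommGroup E] [NormedSpace 𝕜 E]

/-- The upper bidiagonal operator `(fₙ) ↦ (Aₙ fₙ + Bₙ fₙ₊₁)` on `ℓ²(ℕ, E)`; the uniform bounds on
the weights `A` and `B` make it well defined and bounded. -/
def bidiagonal (A B : ℕ → E →L[𝕜] E) {a b : ℝ} (hA : ∀ n, ‖A n‖ ≤ a) (hB : ∀ n, ‖B n‖ ≤ b) :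
    lp (fun _ : ℕ => E) 2 →L[𝕜] lp (fun _ : ℕ => E) 2 :=
  lp.mapCLM 2 A ((norm_nonneg _).trans (hA 0)) hA +
    lp.mapCLM 2 B ((norm_nonneg _).trans (hB 0)) hB ∘L backwardShift 𝕜 E

variable {A B : ℕ → E →L[𝕜] E} {a b : ℝ} {hA : ∀ n, ‖A n‖ ≤ a} {hB : ∀ n, ‖B n‖ ≤ b}

theorem bidiagonal_apply (f : lp (fun _ : ℕ => E) 2) (n : ℕ) :
    bidiagonal A B hA hB f n = A n (f n) + B n (f (n + 1)) := rfl

theorem bidiagonal_single_zero (x : E) :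
    bidiagonal A B hA hB (lp.single 2 0 x) = lp.single 2 0 (A 0 x) := by
  ext n
  cases n <;> simp [bidiagonal_apply]

theorem bidiagonal_single_succ (n : ℕ) (x : E) :
    bidiagonal A B hA hB (lp.single 2 (n + 1) x) =
      lp.single 2 (n + 1) (A (n + 1) x) + lp.single 2 n (B n x) := by
  ext k
  by_cases hk : k = n + 1
  · subst hk; simp [bidiagonal_apply]
  · by_cases hkn : k = n
    · subst hkn; simp [bidiagonal_apply]
    · simp [bidiagonal_apply, hk, hkn]

end Normed

variable {𝕜 E : Type*} [RCLike 𝕜] [NormedAddCommGroup E] [InnerProductSpace 𝕜 E] [CompleteSpace E]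
variable {A B : ℕ → E →L[𝕜] E} {a b : ℝ} {hA : ∀ n, ‖A n‖ ≤ a} {hB : ∀ n, ‖B n‖ ≤ b}

theorem adjoint_bidiagonal_apply_zero (f : lp (fun _ : ℕ => E) 2) :
    adjoint (bidiagonal A B hA hB) f 0 = adjoint (A 0) (f 0) := by
  refine ext_inner_left 𝕜 fun x => ?_
  rw [← lp.inner_single_left (G := fun _ : ℕ => E), ContinuousLinearMap.adjoint_inner_right,
    bidiagonal_single_zero, lp.inner_single_left (G := fun _ : ℕ => E),
    ContinuousLinearMap.adjoint_inner_right]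

theorem adjoint_bidiagonal_apply_succ (f : lp (fun _ : ℕ => E) 2) (n : ℕ) :
    adjoint (bidiagonal A B hA hB) f (n + 1) =
      adjoint (A (n + 1)) (f (n + 1)) + adjoint (B n) (f n) := by
  refine ext_inner_left 𝕜 fun x => ?_
  rw [← lp.inner_single_left (G := fun _ : ℕ => E), ContinuousLinearMap.adjoint_inner_right,
    bidiagonal_single_succ, inner_add_left, lp.inner_single_left (G := fun _ : ℕ => E),
    lp.inner_single_left (G := fun _ : ℕ => E), inner_add_right,
    ContinuousLinearMap.adjoint_inner_right, ContinuousLinearMap.adjoint_inner_right]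

theorem isStarNormal_bidiagonal
    (hzero : star (A 0) * A 0 = A 0 * star (A 0) + B 0 * star (B 0))
    (hsucc : ∀ n, star (A (n + 1)) * A (n + 1) + star (B n) * B n =
      A (n + 1) * star (A (n + 1)) + B (n + 1) * star (B (n + 1)))
    (hoff : ∀ n, star (A n) * B n = B n * star (A (n + 1))) :
    IsStarNormal (bidiagonal A B hA hB) := by
  have hoff' (n : ℕ) : star (B n) * A n = A (n + 1) * star (B n) := by
    simpa using congr_arg star (hoff n)
  refine ⟨ContinuousLinearMap.ext fun f => lp.ext (funext fun n => ?_)⟩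
  cases n with
  | zero =>
    have h₀ := DFunLike.congr_fun hzero (f 0)
    have h₁ := DFunLike.congr_fun (hoff 0) (f 1)
    simp only [ContinuousLinearMap.star_eq_adjoint, mul_apply_eq_comp,
      add_apply, bidiagonal_apply, adjoint_bidiagonal_apply_zero,
      adjoint_bidiagonal_apply_succ, map_add, zero_add] at h₀ h₁ ⊢
    rw [h₀, h₁]
    abel
  | succ n =>
    have h₀ := DFunLike.congr_fun (hoff' n) (f n)
    have h₁ := DFunLike.congr_fun (hsucc n) (f (n + 1))
    have h₂ := DFunLike.congr_fun (hoff (n + 1)) (f (n + 2))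
    simp only [ContinuousLinearMap.star_eq_adjoint, mul_apply_eq_comp,
      add_apply, bidiagonal_apply, adjoint_bidiagonal_apply_succ,
      map_add] at h₀ h₁ h₂ ⊢
    rw [h₀, h₂]
    linear_combination (norm := abel) h₁

end Bidiagonal

section WeightedShift

open Finset (range)

theorem geom_sum_le_inv_one_sub {q : ℝ} (hq0 : 0 ≤ q) (hq1 : q < 1) (n : ℕ) :
    ∑ k ∈ range n, q ^ k ≤ (1 - q)⁻¹ := by
  rw [← tsum_geometric_of_lt_one hq0 hq1]
  exact (summable_geometric_of_lt_one hq0 hq1).sum_le_tsum _ fun k _ => pow_nonneg hq0 k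

theorem exists_isStarNormal_extension_of_selfCommutator_eq_mul_self {q : ℝ} (hq0 : 0 ≤ q)
    (hq1 : q < 1) {T R : H →L[ℂ] H} (hR : star R = R) (hT : star T * T = T * star T + R * R)
    (hRT : R * T = √q • (T * R)) :
    ∃ N : lp (fun _ : ℕ => H) 2 →L[ℂ] lp (fun _ : ℕ => H) 2, IsStarNormal N ∧
      ∀ x, N (lp.single 2 0 x) = lp.single 2 0 (T x) := by
  set w : ℕ → ℝ := fun n => √(∑ k ∈ range (n + 1), q ^ k) with hw
  have hwsq (n : ℕ) : w n * w n = ∑ k ∈ range (n + 1), q ^ k :=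
    Real.mul_self_sqrt (Finset.sum_nonneg fun k _ => pow_nonneg hq0 k)
  have hwsucc (n : ℕ) : w (n + 1) * w (n + 1) = w n * w n + q ^ (n + 1) := by
    rw [hwsq, hwsq, Finset.sum_range_succ _ (n + 1)]
  have hpow (n : ℕ) : √q ^ n * √q ^ n = q ^ n := by rw [← mul_pow, Real.mul_self_sqrt hq0]
  have hA (n : ℕ) : ‖√q ^ n • T‖ ≤ ‖T‖ := by
    rw [norm_smul, Real.norm_of_nonneg (by positivity)]
    exact mul_le_of_le_one_left (norm_nonneg T)
      (pow_le_one₀ (Real.sqrt_nonneg q) (Real.sqrt_le_one.2 hq1.le))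
  have hB (n : ℕ) : ‖w n • R‖ ≤ √(1 - q)⁻¹ * ‖R‖ := by
    rw [norm_smul, Real.norm_of_nonneg (Real.sqrt_nonneg _)]
    gcongr
    exact geom_sum_le_inv_one_sub hq0 hq1 _
  have hTR : star T * R = √q • (R * star T) := by simpa [hR] using congr_arg star hRT
  refine ⟨bidiagonal _ _ hA hB, isStarNormal_bidiagonal ?_ (fun n => ?_) fun n => ?_, fun x => ?_⟩
  · simp [hR, hT, hw]
  · simp only [star_smul, star_trivial, hR, smul_mul_smul_comm, hpow, hwsucc, hT]
    module
  · simp only [star_smul, star_trivial, smul_mul_smul_comm, hTR]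
    module
  · simp [bidiagonal_single_zero]

theorem exists_isStarNormal_extension {q : ℝ} (hq0 : 0 ≤ q) (hq1 : q < 1) {T : H →L[ℂ] H}
    (hT : star T * T = 1 + q • (T * star T)) :
    ∃ N : lp (fun _ : ℕ => H) 2 →L[ℂ] lp (fun _ : ℕ => H) 2, IsStarNormal N ∧
      ∀ x, N (lp.single 2 0 x) = lp.single 2 0 (T x) := by
  obtain ⟨R, hR, hTR, hRT⟩ := exists_sqrt_selfCommutator hq0 hq1.le hT
  exact exists_isStarNormal_extension_of_selfCommutator_eq_mul_self hq0 hq1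
    (IsSelfAdjoint.of_nonneg hR).star_eq hTR hRT

end WeightedShift

section Subnormal

theorem isNormalPMap_toPMap_top {K : Type*} [NormedAddCommGroup K] [InnerProductSpace ℂ K]
    [CompleteSpace K] {N : K →L[ℂ] K} (hN : IsStarNormal N) :
    IsNormalPMap ((N : K →ₗ[ℂ] K).toPMap ⊤) := by
  have hadj : ((N : K →ₗ[ℂ] K).toPMap ⊤).adjoint = (adjoint N : K →ₗ[ℂ] K).toPMap ⊤ :=
    N.toPMap_adjoint_eq_adjoint_toPMap_of_dense (by simp)
  have happly (f : ((N : K →ₗ[ℂ] K).toPMap ⊤).adjoint.domain) :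
      ((N : K →ₗ[ℂ] K).toPMap ⊤).adjoint f = adjoint N f :=
    hadj.le.2 (y := ⟨f, Submodule.mem_top⟩) rfl
  refine ⟨by simp, by rw [hadj]; rfl, fun f hf => ?_⟩
  rw [happly]
  exact ContinuousLinearMap.isStarNormal_iff_norm_eq_adjoint.1 hN f

theorem isSubnormalPMap_of_isStarNormal {E : Type u} [NormedAddCommGroup E]
    [InnerProductSpace ℂ E] {K : Type v} [NormedAddCommGroup K] [InnerProductSpace ℂ K]
    [CompleteSpace K] {S : E →ₗ.[ℂ] E} (hS : Dense (S.domain : Set E)) (ι : E →ₗᵢ[ℂ] K)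
    {N : K →L[ℂ] K} (hN : IsStarNormal N) (hNS : ∀ f : S.domain, N (ι f) = ι (S f)) :
    IsSubnormalPMap.{u, v} S :=
  ⟨hS, ⟨⟨K, ι, _, isNormalPMap_toPMap_top hN, fun f hf => ⟨Submodule.mem_top, hNS ⟨f, hf⟩⟩⟩⟩⟩

theorem NormalExtension.exists_norm_adjoint_le {S : H →ₗ.[ℂ] H} (E : NormalExtension.{u, v} S)
    (hS : Dense (S.domain : Set H)) {f : H} (hf : f ∈ S.domain) :
    ∃ hfA : f ∈ S.adjoint.domain, ‖S.adjoint ⟨f, hfA⟩‖ ≤ ‖S ⟨f, hf⟩‖ := by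
  obtain ⟨K, ι, N, hN, hext⟩ := E
  obtain ⟨hfN, hNf⟩ := hext f hf
  set g := N.adjoint ⟨ι f, hN.dom_eq ▸ hfN⟩
  have hformal (x : S.domain) :
      inner ℂ (adjoint ι.toContinuousLinearMap g) (x : H) = inner ℂ f (S x) := by
    obtain ⟨hxN, hNx⟩ := hext x x.2
    calc inner ℂ (adjoint ι.toContinuousLinearMap g) (x : H) = inner ℂ g (ι x) :=
          ContinuousLinearMap.adjoint_inner_left _ _ _
      _ = inner ℂ (ι f) (N ⟨ι x, hxN⟩) := LinearPMap.adjoint_isFormalAdjoint hN.dense _ ⟨ι x, hxN⟩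
      _ = inner ℂ f (S x) := by rw [hNx, ι.inner_map_map]
  have hfA : f ∈ S.adjoint.domain := LinearPMap.mem_adjoint_domain_of_exists f ⟨_, hformal⟩
  refine ⟨hfA, ?_⟩
  calc ‖S.adjoint ⟨f, hfA⟩‖ = ‖adjoint ι.toContinuousLinearMap g‖ := by
        rw [LinearPMap.adjoint_apply_eq hS _ hformal]
    _ ≤ ‖g‖ := by
        refine ContinuousLinearMap.le_of_opNorm_le_of_le _ ?_ le_rfl |>.trans_eq (one_mul _)
        rw [LinearIsometryEquiv.norm_map]
        exact ι.norm_toContinuousLinearMap_le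
    _ = ‖N ⟨ι f, hfN⟩‖ := (hN.norm_eq _ hfN).symm
    _ = ‖S ⟨f, hf⟩‖ := by rw [hNf, ι.norm_map]

end Subnormal

section Closure

theorem closure_apply_mem_of_isClosed {R E F : Type*} [CommRing R] [AddCommGroup E]
    [AddCommGroup F] [Module R E] [Module R F] [TopologicalSpace E] [TopologicalSpace F]
    [ContinuousAdd E] [ContinuousAdd F] [TopologicalSpace R] [ContinuousSMul R E]
    [ContinuousSMul R F] {S : E →ₗ.[R] F} (hS : S.IsClosable) {C : Set (E × F)} (hC : IsClosed C)
    (hSC : ∀ x : S.domain, ((x : E), S x) ∈ C) (x : S.closure.domain) :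
    ((x : E), S.closure x) ∈ C := by
  have hgraph : (S.graph : Set (E × F)) ⊆ C := by
    intro p hp
    obtain ⟨y, hy, hSy⟩ := S.mem_graph_iff.1 hp
    simpa [hy, hSy] using hSC y
  have hmem : ((x : E), S.closure x) ∈ S.graph.topologicalClosure :=
    hS.graph_closure_eq_closure_graph ▸ S.closure.mem_graph x
  exact closure_minimal hgraph hC hmem

theorem exists_continuousLinearMap_extension {𝕜 E F : Type*} [NormedField 𝕜]
    [NormedAddCommGroup E] [NormedSpace 𝕜 E] [NormedAddCommGroup F] [NormedSpace 𝕜 F]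
    [CompleteSpace F] {S : E →ₗ.[𝕜] F} (hS : Dense (S.domain : Set E)) {M : ℝ}
    (hM : ∀ x : S.domain, ‖S x‖ ≤ M * ‖(x : E)‖) :
    ∃ T : E →L[𝕜] F, ∀ x : S.domain, T x = S x :=
  ⟨S.toFun.extendOfNorm S.domain.subtype,
    LinearMap.extendOfNorm_eq (e := S.domain.subtype) hS.denseRange_val ⟨M, hM⟩⟩

theorem adjoint_isFormalAdjoint_closure {𝕜 E F : Type*} [RCLike 𝕜] [NormedAddCommGroup E]
    [InnerProductSpace 𝕜 E] [CompleteSpace E] [NormedAddCommGroup F] [InnerProductSpace 𝕜 F]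
    {S : E →ₗ.[𝕜] F} (hdense : Dense (S.domain : Set E)) (hS : S.IsClosable) :
    S.adjoint.IsFormalAdjoint S.closure := fun x y =>
  closure_apply_mem_of_isClosed hS
    (C := {p | inner 𝕜 (S.adjoint x) p.1 = inner 𝕜 (x : F) p.2})
    (isClosed_eq (by fun_prop) (by fun_prop))
    (LinearPMap.adjoint_isFormalAdjoint hdense x) y

theorem IsCoreOf.norm_le {E : Type*} [NormedAddCommGroup E] [InnerProductSpace ℂ E]
    {S : E →ₗ.[ℂ] E} {D : Submodule ℂ E} (hcore : IsCoreOf S D) (hS : S.IsClosable) {M : ℝ}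
    (hM : ∀ f (hf : f ∈ D), ‖S ⟨f, hcore.1 hf⟩‖ ≤ M * ‖f‖) (x : S.domain) :
    ‖S x‖ ≤ M * ‖(x : E)‖ := by
  have hle : S ≤ (S.domRestrict D).closure := hcore.2 ▸ S.le_closure
  have hbound := closure_apply_mem_of_isClosed (hS.leIsClosable LinearPMap.domRestrict_le)
    (C := {p : E × E | ‖p.2‖ ≤ M * ‖p.1‖}) (isClosed_le (by fun_prop) (by fun_prop))
    (fun y => hM y y.2.1) ⟨x, hle.1 x.2⟩
  rwa [← hle.2 (x := x) rfl] at hbound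

end Closure

namespace SatOqD

variable {q : ℝ} {S : H →ₗ.[ℂ] H} {D : Submodule ℂ H}

theorem norm_closure_sq (hS : SatOqD q S D) {f : H} (hf : f ∈ D) :
    ‖S.closure ⟨f, hS.memC f hf⟩‖ ^ 2 = ‖f‖ ^ 2 + q * ‖S.adjoint ⟨f, hS.memA f hf⟩‖ ^ 2 := by
  have hadj := adjoint_isFormalAdjoint_closure hS.denseDom hS.closable
  have hSf := hadj ⟨_, hS.memCA f hf⟩ ⟨f, hS.memC f hf⟩
  have hAf := hadj.symm ⟨_, hS.memAC f hf⟩ ⟨f, hS.memA f hf⟩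
  rw [sub_eq_iff_eq_add.1 (hS.eqn f hf), inner_add_left, inner_smul_left, hAf] at hSf
  simp only [inner_self_eq_norm_sq_to_K, Complex.conj_ofReal] at hSf
  apply Complex.ofReal_injective
  push_cast
  exact hSf.symm

theorem norm_apply_le (hS : SatOqD q S D) (hq0 : 0 ≤ q) (hq1 : q < 1) {f : H} (hf : f ∈ D)
    (hfS : f ∈ S.domain) (hle : ‖S.adjoint ⟨f, hS.memA f hf⟩‖ ≤ ‖S ⟨f, hfS⟩‖) :
    ‖S ⟨f, hfS⟩‖ ≤ (√(1 - q))⁻¹ * ‖f‖ := by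
  have hq : 0 < 1 - q := sub_pos.2 hq1
  have hclosure : S ⟨f, hfS⟩ = S.closure ⟨f, hS.memC f hf⟩ := S.le_closure.2 rfl
  have hsq : (1 - q) * ‖S ⟨f, hfS⟩‖ ^ 2 ≤ ‖f‖ ^ 2 := by
    have hnorm := hS.norm_closure_sq hf
    rw [← hclosure] at hnorm
    have : q * ‖S.adjoint ⟨f, hS.memA f hf⟩‖ ^ 2 ≤ q * ‖S ⟨f, hfS⟩‖ ^ 2 := by gcongr
    linarith
  rw [le_inv_mul_iff₀ (Real.sqrt_pos.2 hq)]
  refine le_of_sq_le_sq ?_ (norm_nonneg f)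
  rwa [mul_pow, Real.sq_sqrt hq.le]

theorem star_mul_self_eq (hS : SatOqD q S D) {T : H →L[ℂ] H} (hT : ∀ x : S.domain, T x = S x) :
    star T * T = 1 + q • (T * star T) := by
  have hclosure (x : S.closure.domain) : S.closure x = T x :=
    (closure_apply_mem_of_isClosed hS.closable (C := {p : H × H | T p.1 = p.2})
      (isClosed_eq (by fun_prop) (by fun_prop)) hT x).symm
  have hadj (x : S.adjoint.domain) : S.adjoint x = star T x :=
    LinearPMap.adjoint_apply_eq hS.denseDom x fun y => by
      rw [ContinuousLinearMap.star_eq_adjoint, ContinuousLinearMap.adjoint_inner_left, hT]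
  refine ContinuousLinearMap.ext_on (s := (D : Set H))
    (hS.denseD.mono Submodule.subset_span) fun f hf => ?_
  have h := sub_eq_iff_eq_add.1 (hS.eqn f hf)
  simp only [hadj, hclosure] at h
  exact h

theorem isSubnormalPMap_of_bounded (hS : SatOqD q S D) (hq0 : 0 ≤ q) (hq1 : q < 1) {M : ℝ}
    (hM : ∀ x : S.domain, ‖S x‖ ≤ M * ‖(x : H)‖) : IsSubnormalPMap.{u, u} S := by
  obtain ⟨T, hT⟩ := exists_continuousLinearMap_extension hS.denseDom hM
  obtain ⟨N, hN, hNT⟩ := exists_isStarNormal_extension hq0 hq1 (hS.star_mul_self_eq hT)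
  let ι : H →ₗᵢ[ℂ] lp (fun _ : ℕ => H) 2 :=
    { toLinearMap := lp.lsingle (E := fun _ : ℕ => H) 2 0, norm_map' := fun x => by simp }
  exact isSubnormalPMap_of_isStarNormal hS.denseDom ι hN fun f =>
    (hNT f).trans (congr_arg ι (hT f))

end SatOqD

theorem stmt14_general (q : ℝ) (hq0 : 0 ≤ q) (hq1 : q < 1) (S : H →ₗ.[ℂ] H) (D : Submodule ℂ H)
    (hS : SatOqD q S D) (hcore : IsCoreOf S D) :
    [∀ f (hf : f ∈ S.domain), ‖(S ⟨f, hf⟩ : H)‖ ≤ (Real.sqrt (1 - q))⁻¹ * ‖f‖,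
     ∃ M, 0 ≤ M ∧ ∀ f (hf : f ∈ S.domain), ‖(S ⟨f, hf⟩ : H)‖ ≤ M * ‖f‖,
     IsSubnormalPMap.{u, u} S,
     ∀ f (hf : f ∈ D),
       ‖(S.adjoint ⟨f, hS.memA f hf⟩ : H)‖ ≤ ‖(S ⟨f, hcore.1 hf⟩ : H)‖].TFAE := by
  tfae_have 1 → 2 := fun h => ⟨_, by positivity, h⟩
  tfae_have 2 → 3 := fun ⟨_, _, hM⟩ =>
    hS.isSubnormalPMap_of_bounded hq0 hq1 fun x => hM x x.2
  tfae_have 3 → 4 := fun ⟨hdense, ⟨E⟩⟩ _ hf =>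
    (E.exists_norm_adjoint_le hdense (hcore.1 hf)).2
  tfae_have 4 → 1 := fun h f hf =>
    hcore.norm_le hS.closable (fun g hg => hS.norm_apply_le hq0 hq1 hg (hcore.1 hg) (h g hg))
      ⟨f, hf⟩
  tfae_finish

/-- Let `0 ≤ q < 1` and let `S` satisfy `(O_{q,D})` on a dense subspace
`D` invariant under `S` and `S*` which is a core of `S`. The following are equivalent:
(i) `‖S f‖ ≤ (1-q)^{-1/2} ‖f‖` on `dom S`; (ii) `S` is bounded; (iii) `S` is subnormal;
(iv) `‖S* f‖ ≤ ‖S f‖` on `D`. -/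
theorem stmt14 (q : ℝ) (hq0 : 0 ≤ q) (hq1 : q < 1) (S : H →ₗ.[ℂ] H) (D : Submodule ℂ H)
    (hS : SatOqD q S D) (hD : D ≤ S.domain)
    (hSD : ∀ f (hf : f ∈ D), (S ⟨f, hD hf⟩ : H) ∈ D)
    (hAD : ∀ f (hf : f ∈ D), (S.adjoint ⟨f, hS.memA f hf⟩ : H) ∈ D)
    (hcore : IsCoreOf S D) :
    [∀ f (hf : f ∈ S.domain), ‖(S ⟨f, hf⟩ : H)‖ ≤ (Real.sqrt (1 - q))⁻¹ * ‖f‖,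
     ∃ M, 0 ≤ M ∧ ∀ f (hf : f ∈ S.domain), ‖(S ⟨f, hf⟩ : H)‖ ≤ M * ‖f‖,
     IsSubnormalPMap.{u, u} S,
     ∀ f (hf : f ∈ D), ‖(S.adjoint ⟨f, hS.memA f hf⟩ : H)‖ ≤ ‖(S ⟨f, hD hf⟩ : H)‖].TFAE :=
  stmt14_general q hq0 hq1 S D hS hcore
end
end

section
/- Let q > 0, let H be a complex Hilbert space with orthonormal basis (e_n)_{n∈ℕ}, and let S be the closure of the weighted shift defined on span{e_n : n ∈ ℕ} by e_n ↦ √([n+1]_q) e_{n+1}. Then S is subnormal and admits a normal extension which is both tight and *-tight; in particular dom S = dom S*. -/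
noncomputable section

universe u v

variable {H : Type u} [NormedAddCommGroup H] [InnerProductSpace ℂ H] [CompleteSpace H]

/-- The `q`-number `[n]_q`. -/
def qNum (q : ℝ) (n : ℕ) : ℝ := if q = 1 then (n : ℝ) else (1 - q ^ n) / (1 - q)

attribute [instance] NormalExtension.nK NormalExtension.iK NormalExtension.cK

/-- The extension is *tight* if `dom N̄ ∩ H = dom Ā`. -/
def NormalExtension.Tight {A : H →ₗ.[ℂ] H} (E : NormalExtension A) : Prop :=
  A.IsClosable ∧ E.N.IsClosable ∧
    ∀ f : H, E.ι f ∈ E.N.closure.domain ↔ f ∈ A.closure.domain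

/-- The extension is *`*`-tight* if `dom N* ∩ H = dom A*`. -/
def NormalExtension.StarTight {A : H →ₗ.[ℂ] H} (E : NormalExtension A) : Prop :=
  ∀ f : H, E.ι f ∈ E.N.adjoint.domain ↔ f ∈ A.adjoint.domain

/-!
Let `a n` be the weights of a weighted shift. If the products `∏ i < n, a i ^ 2` are the moments of
a measure `ν` on `[0, ∞)`, let `μ` be the rotation-invariant measure on `ℂ` for which `|z| ^ 2` has
distribution `ν`. In `L²(μ)` the monomials `z ^ n` are orthogonal and `‖z ^ n‖ ^ 2` is the `n`-th
product, so sending `e n` to the normalized `z ^ n` makes the normal operator of multiplication by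
`z` an extension of the shift. For `a n ^ 2 = [n+1]_q` such a `ν` is `exp (-t) dt` if `q = 1`, and
is carried by the points `q ^ k / |q - 1|` otherwise, with `k ≥ 0` if `q < 1` and `k ∈ ℤ` if
`1 < q`.

A normal extension of `S` forces `dom S ⊆ dom S*`. Conversely, `f ∈ dom S*` gives
`∑ [n+1]_q |f (n+1)| ^ 2 < ∞`, and as `[n+2]_q = 1 + q [n+1]_q` this implies
`∑ [n+1]_q |f n| ^ 2 < ∞`, that is `f ∈ dom S`. If `N` is a normal extension of `S`, then
`dom N ∩ H = dom N* ∩ H` lies between `dom S` and `dom S*`, hence equals both.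
-/

section PartialMaps

open LinearPMap Filter Topology
open scoped InnerProductSpace

theorem linearPMap_closure_eq_of_isClosed {R E F : Type*} [CommRing R] [TopologicalSpace R]
    [AddCommGroup E] [AddCommGroup F] [Module R E] [Module R F] [TopologicalSpace E]
    [TopologicalSpace F] [ContinuousAdd E] [ContinuousAdd F] [ContinuousSMul R E]
    [ContinuousSMul R F] {A : E →ₗ.[R] F} (hA : A.IsClosed) : A.closure = A :=
  eq_of_eq_graph <| hA.isClosable.graph_closure_eq_closure_graph.symm.trans
    hA.submodule_topologicalClosure_eq

theorem linearPMap_adjoint_domain_antitone {𝕜 E F : Type*} [RCLike 𝕜] [NormedAddCommGroup E]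
    [InnerProductSpace 𝕜 E] [NormedAddCommGroup F] [InnerProductSpace 𝕜 F] [CompleteSpace E]
    {A B : E →ₗ.[𝕜] F} (hAB : A ≤ B) : B†.domain ≤ A†.domain := by
  intro f hf
  rw [mem_adjoint_domain_iff] at hf ⊢
  refine (hf.comp (continuous_inclusion hAB.1)).congr fun x => ?_
  exact congrArg (inner 𝕜 f) (hAB.2 (x := x) (y := Submodule.inclusion hAB.1 x) rfl).symm

theorem linearPMap_isClosed_of_norm_apply_eq {R E F G : Type*} [CommRing R] [NormedAddCommGroup E]
    [NormedAddCommGroup F] [NormedAddCommGroup G] [CompleteSpace G] [Module R E] [Module R F]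
    [Module R G] {A : E →ₗ.[R] F} {B : E →ₗ.[R] G} (hB : B.IsClosed)
    (hdom : A.domain = B.domain)
    (hnorm : ∀ (x : A.domain) (y : B.domain), (x : E) = y → ‖A x‖ = ‖B y‖) : A.IsClosed := by
  refine isSeqClosed_iff_isClosed.1 fun p l hp hpl => ?_
  choose x hx₁ hx₂ using fun n => (mem_graph_iff A).1 (hp n)
  let y (n : ℕ) : B.domain := ⟨x n, hdom ▸ (x n).2⟩
  have hfst : Tendsto (fun n => (x n : E)) atTop (𝓝 l.1) :=
    ((continuous_fst.tendsto l).comp hpl).congr fun n => (hx₁ n).symm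
  have hsnd : Tendsto (fun n => A (x n)) atTop (𝓝 l.2) :=
    ((continuous_snd.tendsto l).comp hpl).congr fun n => (hx₂ n).symm
  have hdist (m n : ℕ) : dist (B (y m)) (B (y n)) = dist (A (x m)) (A (x n)) := by
    rw [dist_eq_norm, dist_eq_norm, ← B.map_sub, ← A.map_sub]
    exact (hnorm _ _ rfl).symm
  have hcauchy : CauchySeq fun n => B (y n) := by
    simpa only [Metric.cauchySeq_iff, hdist] using Metric.cauchySeq_iff.1 hsnd.cauchySeq
  obtain ⟨g, hg⟩ := cauchySeq_tendsto_of_complete hcauchy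
  obtain ⟨y', hy'₁, hy'₂⟩ := (mem_graph_iff B).1 <|
    hB.mem_of_tendsto (hfst.prodMk_nhds hg) (.of_forall fun n => B.mem_graph (y n))
  let x' : A.domain := ⟨y', hdom.ge y'.2⟩
  have hlim : Tendsto (fun n => A (x n)) atTop (𝓝 (A x')) := by
    rw [tendsto_iff_norm_sub_tendsto_zero] at hg ⊢
    refine hg.congr fun n => ?_
    rw [← A.map_sub, hnorm _ (y n - y') rfl, B.map_sub]
    exact congrArg (fun z => ‖B (y n) - z‖) hy'₂.symm
  exact (mem_graph_iff A).2 ⟨x', hy'₁, tendsto_nhds_unique hlim hsnd⟩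

variable {H₁ K : Type*} [NormedAddCommGroup H₁] [InnerProductSpace ℂ H₁]
  [NormedAddCommGroup K] [InnerProductSpace ℂ K] [CompleteSpace K]
  {ι : H₁ →ₗᵢ[ℂ] K} {A : H₁ →ₗ.[ℂ] H₁} {N : K →ₗ.[ℂ] K}

theorem IsNormalPMap.isClosed (hN : IsNormalPMap N) : N.IsClosed := by
  refine linearPMap_isClosed_of_norm_apply_eq (adjoint_isClosed hN.dense) hN.dom_eq
    fun x y hxy => ?_
  obtain rfl : y = ⟨x, hN.dom_eq ▸ x.2⟩ := Subtype.ext hxy.symm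
  exact hN.norm_eq x x.2

theorem extendsVia_iff_graph_le_comap :
    ExtendsVia ι A N ↔ A.graph ≤ N.graph.comap (ι.toLinearMap.prodMap ι.toLinearMap) := by
  refine ⟨fun h p hp => ?_, fun h f hf => ?_⟩
  · obtain ⟨x, hx₁, hx₂⟩ := (mem_graph_iff A).1 hp
    obtain ⟨hι, hN⟩ := h x x.2
    exact (mem_graph_iff N).2 ⟨⟨ι x, hι⟩, congrArg ι hx₁, hN.trans (congrArg ι hx₂)⟩
  · obtain ⟨⟨y, hy⟩, hy₁, hy₂⟩ := (mem_graph_iff N).1 (h (A.mem_graph ⟨f, hf⟩))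
    obtain rfl : y = ι f := hy₁
    exact ⟨hy, hy₂⟩

theorem ExtendsVia.topologicalClosure_graph_le (h : ExtendsVia ι A N) (hN : N.IsClosed) :
    A.graph.topologicalClosure ≤ N.graph.comap (ι.toLinearMap.prodMap ι.toLinearMap) :=
  Submodule.topologicalClosure_minimal _ (extendsVia_iff_graph_le_comap.1 h) <|
    hN.preimage (ι.continuous.prodMap ι.continuous)

theorem ExtendsVia.isClosable (h : ExtendsVia ι A N) (hN : N.IsClosed) : A.IsClosable := by
  refine ⟨_, (Submodule.toLinearPMap_graph_eq _ fun x hx hx₀ => ?_).symm⟩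
  have hzero := N.graph_fst_eq_zero_snd (h.topologicalClosure_graph_le hN hx) (by simp [hx₀])
  exact (map_eq_zero_iff ι ι.injective).1 hzero

theorem ExtendsVia.closure (h : ExtendsVia ι A N) (hN : N.IsClosed) :
    ExtendsVia ι A.closure N := by
  rw [extendsVia_iff_graph_le_comap, ← (h.isClosable hN).graph_closure_eq_closure_graph]
  exact h.topologicalClosure_graph_le hN

theorem ExtendsVia.mem_adjoint_domain [CompleteSpace H₁] (h : ExtendsVia ι A N)
    (hN : Dense (N.domain : Set K)) {f : H₁} (hf : ι f ∈ N†.domain) : f ∈ A†.domain := by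
  refine mem_adjoint_domain_of_exists _
    ⟨ι.toContinuousLinearMap.adjoint (N† ⟨ι f, hf⟩), fun x => ?_⟩
  obtain ⟨hx, hNx⟩ := h x x.2
  calc ⟪ι.toContinuousLinearMap.adjoint (N† ⟨ι f, hf⟩), (x : H₁)⟫_ℂ
      = ⟪N† ⟨ι f, hf⟩, ι x⟫_ℂ := ContinuousLinearMap.adjoint_inner_left _ _ _
    _ = ⟪ι f, N ⟨ι x, hx⟩⟫_ℂ := adjoint_isFormalAdjoint hN ⟨ι f, hf⟩ ⟨ι x, hx⟩
    _ = ⟪f, A x⟫_ℂ := by rw [hNx, ι.inner_map_map]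

theorem extendsVia_of_domain_eq_span {κ : Type*} {x : κ → H₁}
    (hdom : A.domain = Submodule.span ℂ (Set.range x))
    (h : ∀ i (hi : x i ∈ A.domain), (ι (x i), ι (A ⟨x i, hi⟩)) ∈ N.graph) :
    ExtendsVia ι A N := by
  let pairs := A.graph ⊓ N.graph.comap (ι.toLinearMap.prodMap ι.toLinearMap)
  have hle : A.domain ≤ pairs.map (LinearMap.fst ℂ H₁ H₁) := by
    rw [hdom, Submodule.span_le]
    rintro _ ⟨i, rfl⟩
    have hi : x i ∈ A.domain := hdom ▸ Submodule.subset_span ⟨i, rfl⟩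
    exact ⟨(x i, A ⟨x i, hi⟩), ⟨A.mem_graph ⟨x i, hi⟩, h i hi⟩, rfl⟩
  rw [extendsVia_iff_graph_le_comap]
  rintro ⟨f, g⟩ hfg
  obtain ⟨⟨_, g'⟩, ⟨hA, hN⟩, rfl⟩ := hle (mem_domain_of_mem_graph hfg)
  obtain rfl : g = g' := mem_graph_snd_inj A hfg hA rfl
  exact hN

namespace NormalExtension

variable [CompleteSpace H₁]

theorem domain_le_adjoint_domain (E : NormalExtension.{_, v} A) : A.domain ≤ A†.domain :=
  fun f hf =>
    E.ext.mem_adjoint_domain E.normal.dense (E.normal.dom_eq ▸ (E.ext f hf).1)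

variable {E : NormalExtension.{_, v} A}

theorem starTight_of_adjoint_domain_le (h : A†.domain ≤ A.domain) : E.StarTight := fun f =>
  ⟨E.ext.mem_adjoint_domain E.normal.dense, fun hf => E.normal.dom_eq ▸ (E.ext f (h hf)).1⟩

theorem tight_of_adjoint_domain_le (h : A†.domain ≤ A.domain) : E.Tight := by
  have hN := E.normal.isClosed
  refine ⟨E.ext.isClosable hN, hN.isClosable, fun f => ?_⟩
  rw [linearPMap_closure_eq_of_isClosed hN]
  refine ⟨fun hf => A.le_closure.1 (h ?_), fun hf => (E.ext.closure hN f hf).1⟩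
  exact E.ext.mem_adjoint_domain E.normal.dense (E.normal.dom_eq ▸ hf)

end NormalExtension

end PartialMaps

section WeightedShift

open LinearPMap
open scoped InnerProductSpace

variable {𝕜 E : Type*} [RCLike 𝕜] [NormedAddCommGroup E] [InnerProductSpace 𝕜 E]

/-- `T` is the weighted shift with weights `a`, defined on the linear span of the orthonormal
basis `e`. -/
structure IsWeightedShift (e : HilbertBasis ℕ 𝕜 E) (a : ℕ → 𝕜) (T : E →ₗ.[𝕜] E) : Prop where
  domain_eq : T.domain = Submodule.span 𝕜 (Set.range e)
  apply_basis : ∀ n (hn : e n ∈ T.domain), T ⟨e n, hn⟩ = a n • e (n + 1)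

namespace IsWeightedShift

variable {e : HilbertBasis ℕ 𝕜 E} {a : ℕ → 𝕜} {T : E →ₗ.[𝕜] E}

theorem basis_mem_domain (hT : IsWeightedShift e a T) (n : ℕ) : e n ∈ T.domain :=
  hT.domain_eq ▸ Submodule.subset_span ⟨n, rfl⟩

theorem mk_basis_mem_graph (hT : IsWeightedShift e a T) (n : ℕ) :
    (e n, a n • e (n + 1)) ∈ T.graph :=
  (mem_graph_iff T).2 ⟨⟨e n, hT.basis_mem_domain n⟩, rfl, hT.apply_basis n _⟩

theorem dense_domain (hT : IsWeightedShift e a T) : Dense (T.domain : Set E) := by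
  rw [hT.domain_eq, Submodule.dense_iff_topologicalClosure_eq_top]
  exact e.dense_span

theorem summable_of_mem_adjoint_domain [CompleteSpace E] (hT : IsWeightedShift e a T) {f : E}
    (hf : f ∈ T†.domain) : Summable fun n => ‖a n‖ ^ 2 * ‖⟪e (n + 1), f⟫_𝕜‖ ^ 2 := by
  refine (e.orthonormal.inner_products_summable (T† ⟨f, hf⟩)).congr fun n => ?_
  have hadj := adjoint_isFormalAdjoint hT.dense_domain ⟨f, hf⟩ ⟨e n, hT.basis_mem_domain n⟩
  rw [hT.apply_basis, inner_smul_right] at hadj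
  rw [norm_inner_symm, hadj, norm_mul, norm_inner_symm, mul_pow]

theorem mem_domain_of_summable [CompleteSpace E] {B : E →ₗ.[𝕜] E} (hT : IsWeightedShift e a T)
    (hTB : T ≤ B) (hB : B.IsClosed) {f : E}
    (hf : Summable fun n => ‖a n‖ ^ 2 * ‖⟪e n, f⟫_𝕜‖ ^ 2) : f ∈ B.domain := by
  have hshift : Orthonormal 𝕜 fun n => e (n + 1) := e.orthonormal.comp _ (add_left_injective 1)
  have hcoeff : Summable fun n => ‖⟪e n, f⟫_𝕜 * a n‖ ^ 2 := by
    simpa only [norm_mul, mul_pow, mul_comm] using hf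
  have himage : Summable fun n => (⟪e n, f⟫_𝕜 * a n) • e (n + 1) :=
    (hshift.orthogonalFamily.summable_iff_norm_sq_summable fun n => ⟪e n, f⟫_𝕜 * a n).2 hcoeff
  have hgraph := (e.hasSum_repr f).prodMk himage.hasSum
  refine mem_domain_of_mem_graph (hB.mem_of_tendsto hgraph (.of_forall fun s => ?_))
  refine B.graph.sum_mem fun n _ => ?_
  rw [e.repr_apply_apply, ← smul_smul, ← Prod.smul_mk]
  exact B.graph.smul_mem _ (le_graph_of_le hTB (hT.mk_basis_mem_graph n))

theorem adjoint_closure_domain_le [CompleteSpace E] (hT : IsWeightedShift e a T)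
    (hclosable : T.IsClosable) {b c : ℝ} (ha : ∀ n, ‖a (n + 1)‖ ^ 2 ≤ b + c * ‖a n‖ ^ 2) :
    T.closure†.domain ≤ T.closure.domain := by
  intro f hf
  refine hT.mem_domain_of_summable T.le_closure hclosable.closure_isClosed ?_
  have hadj := hT.summable_of_mem_adjoint_domain <|
    linearPMap_adjoint_domain_antitone T.le_closure hf
  have hnorm := (summable_nat_add_iff 1).2 (e.orthonormal.inner_products_summable f)
  rw [← summable_nat_add_iff 1]
  refine ((hnorm.mul_left b).add (hadj.mul_left c)).of_nonneg_of_le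
    (fun n => by positivity) fun n => ?_
  calc ‖a (n + 1)‖ ^ 2 * ‖⟪e (n + 1), f⟫_𝕜‖ ^ 2
      ≤ (b + c * ‖a n‖ ^ 2) * ‖⟪e (n + 1), f⟫_𝕜‖ ^ 2 := by gcongr; exact ha n
    _ = b * ‖⟪e (n + 1), f⟫_𝕜‖ ^ 2 + c * (‖a n‖ ^ 2 * ‖⟪e (n + 1), f⟫_𝕜‖ ^ 2) := by ring

end IsWeightedShift

theorem exists_linearIsometry_apply_eq {F κ : Type*} [NormedAddCommGroup F]
    [InnerProductSpace 𝕜 F] [CompleteSpace F] (e : HilbertBasis κ 𝕜 E) {v : κ → F}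
    (hv : Orthonormal 𝕜 v) : ∃ ι : E →ₗᵢ[𝕜] F, ∀ k, ι (e k) = v k := by
  classical
  refine ⟨hv.orthogonalFamily.linearIsometry.comp e.repr.toLinearIsometry, fun k => ?_⟩
  calc hv.orthogonalFamily.linearIsometry (e.repr (e k))
      = LinearIsometry.toSpanSingleton 𝕜 F (hv.1 k) 1 := by
        rw [e.repr_self]
        exact hv.orthogonalFamily.linearIsometry_apply_single 1
    _ = v k := by rw [LinearIsometry.toSpanSingleton_apply, one_smul]

theorem orthonormal_inv_norm_smul {κ : Type*} {v : κ → E} (hv : ∀ k, v k ≠ 0)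
    (horth : Pairwise fun j k => ⟪v j, v k⟫_𝕜 = 0) :
    Orthonormal 𝕜 fun k => ((‖v k‖⁻¹ : ℝ) : 𝕜) • v k := by
  refine ⟨fun k => ?_, fun j k hjk => ?_⟩
  · simpa only [RCLike.ofReal_inv] using norm_smul_inv_norm (hv k)
  · simp only [inner_smul_left, inner_smul_right, horth hjk, mul_zero]

theorem exists_extendsVia_of_orthogonal_orbit {E K : Type*} [NormedAddCommGroup E]
    [InnerProductSpace ℂ E] [NormedAddCommGroup K] [InnerProductSpace ℂ K] [CompleteSpace K]
    {e : HilbertBasis ℕ ℂ E} {a : ℕ → ℝ} {T : E →ₗ.[ℂ] E} {N : K →ₗ.[ℂ] K} {v : ℕ → K}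
    (hT : IsWeightedShift e (fun n => (a n : ℂ)) T) (hv : ∀ n, v n ≠ 0)
    (horth : Pairwise fun m n => ⟪v m, v n⟫_ℂ = 0) (hnorm : ∀ n, ‖v (n + 1)‖ = a n * ‖v n‖)
    (hN : ∀ n, (v n, v (n + 1)) ∈ N.graph) : ∃ ι : E →ₗᵢ[ℂ] K, ExtendsVia ι T N := by
  obtain ⟨ι, hι⟩ := exists_linearIsometry_apply_eq e (orthonormal_inv_norm_smul hv horth)
  refine ⟨ι, extendsVia_of_domain_eq_span hT.domain_eq fun n hn => ?_⟩
  have hweight : a n * ‖v (n + 1)‖⁻¹ = ‖v n‖⁻¹ := by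
    have := norm_ne_zero_iff.2 (hv n)
    have := norm_ne_zero_iff.2 (hv (n + 1))
    field_simp
    exact (hnorm n).symm
  rw [hT.apply_basis, ι.map_smul, hι, hι, smul_smul]
  have : (a n : ℂ) * ((‖v (n + 1)‖⁻¹ : ℝ) : ℂ) = ((‖v n‖⁻¹ : ℝ) : ℂ) := by
    exact_mod_cast hweight
  exact this ▸ N.graph.smul_mem _ (hN n)

end WeightedShift

section MultiplicationOperator

open LinearPMap MeasureTheory Filter
open scoped InnerProductSpace ENNReal

variable {X 𝕜 : Type*} [MeasurableSpace X] {μ : Measure X} [RCLike 𝕜]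

/-- Multiplication by `φ` on almost everywhere classes of functions, as a linear map. -/
def aeMulLeft (φ : X →ₘ[μ] 𝕜) : (X →ₘ[μ] 𝕜) →ₗ[𝕜] X →ₘ[μ] 𝕜 where
  toFun f := φ * f
  map_add' f g := AEEqFun.toGerm_injective <| by
    simp only [AEEqFun.mul_toGerm, AEEqFun.add_toGerm, mul_add]
  map_smul' c f := by
    induction φ, f using AEEqFun.induction_on₂ with
    | _ φ hφ f hf =>
      simp only [AEEqFun.smul_mk, AEEqFun.mk_mul_mk, mul_smul_comm, RingHom.id_apply]

/-- The maximal multiplication operator `f ↦ φ * f` in `L²(μ)`, with domain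
`{f ∈ L²(μ) | φ * f ∈ L²(μ)}`. -/
def mulOp (φ : X →ₘ[μ] 𝕜) : Lp 𝕜 2 μ →ₗ.[𝕜] Lp 𝕜 2 μ where
  domain :=
    (Lp.LpSubmodule 𝕜 𝕜 2 μ).comap (aeMulLeft φ ∘ₗ (Lp.LpSubmodule 𝕜 𝕜 2 μ).subtype)
  toFun := (aeMulLeft φ ∘ₗ (Lp.LpSubmodule 𝕜 𝕜 2 μ).subtype).restrict
    (q := Lp.LpSubmodule 𝕜 𝕜 2 μ) fun _ hf => hf

theorem mk_mem_mulOp_graph {φ : X →ₘ[μ] 𝕜} {f g : Lp 𝕜 2 μ}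
    (h : φ * f = (g : X →ₘ[μ] 𝕜)) : (f, g) ∈ (mulOp φ).graph :=
  (mem_graph_iff _).2 ⟨⟨f, show φ * f ∈ Lp 𝕜 2 μ from h ▸ g.2⟩, rfl, Subtype.ext h⟩

theorem mul_mem_Lp_of_bound {p : ℝ≥0∞} {ψ : X →ₘ[μ] 𝕜} {C : ℝ} (hψ : ∀ᵐ x ∂μ, ‖ψ x‖ ≤ C)
    (f : Lp 𝕜 p μ) : ψ * f ∈ Lp 𝕜 p μ := by
  refine Lp.mem_Lp_of_ae_le_mul (g := f) (c := C) ?_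
  filter_upwards [hψ, AEEqFun.coeFn_mul ψ f] with x hx hmul
  rw [hmul, Pi.mul_apply, norm_mul]
  gcongr

theorem inner_star_mul {ψ : X →ₘ[μ] 𝕜} {f g f' g' : Lp 𝕜 2 μ}
    (hf : star ψ * f = (f' : X →ₘ[μ] 𝕜)) (hg : ψ * g = (g' : X →ₘ[μ] 𝕜)) :
    ⟪f', g⟫_𝕜 = ⟪f, g'⟫_𝕜 := by
  rw [L2.inner_def, L2.inner_def]
  refine integral_congr_ae ?_
  filter_upwards [AEEqFun.coeFn_mul (star ψ) f, AEEqFun.coeFn_mul ψ g, AEEqFun.coeFn_star ψ]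
    with x hf' hg' hψ
  rw [hf] at hf'
  rw [hg] at hg'
  rw [hf', hg', Pi.mul_apply, Pi.mul_apply, hψ, Pi.star_apply, RCLike.inner_apply,
    RCLike.inner_apply, map_mul, RCLike.star_def, RCLike.conj_conj]
  ring

/-- The strictly positive function `(1 + ‖φ‖)⁻¹`. Multiplication by it is bounded, injective and
self-adjoint, and maps `L²(μ)` into the domain of `mulOp φ`. -/
def damping (φ : X →ₘ[μ] 𝕜) : X →ₘ[μ] 𝕜 :=
  AEEqFun.comp (fun z => (((1 + ‖z‖)⁻¹ : ℝ) : 𝕜))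
    (RCLike.continuous_ofReal.comp <| by fun_prop (disch := intros; positivity)) φ

theorem coeFn_damping (φ : X →ₘ[μ] 𝕜) :
    damping φ =ᵐ[μ] fun x => (((1 + ‖φ x‖)⁻¹ : ℝ) : 𝕜) :=
  AEEqFun.coeFn_comp _ _ φ

theorem star_damping (φ : X →ₘ[μ] 𝕜) : star (damping φ) = damping φ := by
  refine AEEqFun.ext ?_
  filter_upwards [AEEqFun.coeFn_star (damping φ), coeFn_damping φ] with x hstar hx
  rw [hstar, Pi.star_apply, hx, RCLike.star_def, RCLike.conj_ofReal]

theorem ae_norm_damping_le_one (φ : X →ₘ[μ] 𝕜) : ∀ᵐ x ∂μ, ‖damping φ x‖ ≤ 1 := by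
  filter_upwards [coeFn_damping φ] with x hx
  rw [hx, RCLike.norm_ofReal, abs_of_nonneg (by positivity)]
  exact inv_le_one_of_one_le₀ (le_add_of_nonneg_right (norm_nonneg _))

theorem ae_norm_mul_damping_le_one (φ : X →ₘ[μ] 𝕜) : ∀ᵐ x ∂μ, ‖(φ * damping φ) x‖ ≤ 1 := by
  filter_upwards [AEEqFun.coeFn_mul φ (damping φ), coeFn_damping φ] with x hmul hx
  rw [hmul, Pi.mul_apply, hx, norm_mul, RCLike.norm_ofReal, abs_of_nonneg (by positivity),
    ← div_eq_mul_inv]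
  exact div_le_one_of_le₀ (le_add_of_nonneg_left zero_le_one) (by positivity)

theorem damping_mul_cancel {φ f g : X →ₘ[μ] 𝕜} (h : damping φ * f = damping φ * g) : f = g := by
  refine AEEqFun.ext ?_
  filter_upwards [AEEqFun.coeFn_mul (damping φ) f, AEEqFun.coeFn_mul (damping φ) g,
    coeFn_damping φ] with x hf hg hx
  rw [h, hg, Pi.mul_apply, Pi.mul_apply, hx] at hf
  refine (mul_left_cancel₀ ?_ hf).symm
  exact RCLike.ofReal_ne_zero.2 (by positivity)

/-- Multiplication by `damping φ`, as a map of `L²(μ)` to itself. -/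
def damp (φ : X →ₘ[μ] 𝕜) (f : Lp 𝕜 2 μ) : Lp 𝕜 2 μ :=
  ⟨damping φ * f, mul_mem_Lp_of_bound (ae_norm_damping_le_one φ) f⟩

theorem inner_damp (φ : X →ₘ[μ] 𝕜) (f g : Lp 𝕜 2 μ) : ⟪damp φ f, g⟫_𝕜 = ⟪f, damp φ g⟫_𝕜 :=
  inner_star_mul (ψ := damping φ) (by rw [star_damping]; rfl) rfl

theorem damp_mem_mulOp_domain (φ : X →ₘ[μ] 𝕜) (f : Lp 𝕜 2 μ) : damp φ f ∈ (mulOp φ).domain := by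
  have h := mul_mem_Lp_of_bound (ae_norm_mul_damping_le_one φ) f
  rwa [mul_assoc] at h

theorem dense_mulOp_domain (φ : X →ₘ[μ] 𝕜) : Dense ((mulOp φ).domain : Set (Lp 𝕜 2 μ)) := by
  rw [Submodule.dense_iff_topologicalClosure_eq_top, Submodule.topologicalClosure_eq_top_iff,
    Submodule.eq_bot_iff]
  intro g hg
  have hzero : damp φ g = 0 := ext_inner_right 𝕜 fun f => by
    rw [inner_damp, inner_zero_left]
    exact Submodule.inner_left_of_mem_orthogonal (damp_mem_mulOp_domain φ f) hg
  refine Subtype.ext (damping_mul_cancel (φ := φ) ?_)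
  exact (congrArg Subtype.val hzero).trans (AEEqFun.toGerm_injective (by simp))

theorem isFormalAdjoint_mulOp (φ : X →ₘ[μ] 𝕜) : (mulOp (star φ)).IsFormalAdjoint (mulOp φ) :=
  fun _ _ => inner_star_mul rfl rfl

theorem ae_norm_star_mul_apply (φ f : X →ₘ[μ] 𝕜) : ∀ᵐ x ∂μ, ‖(star φ * f) x‖ = ‖(φ * f) x‖ := by
  filter_upwards [AEEqFun.coeFn_mul (star φ) f, AEEqFun.coeFn_mul φ f, AEEqFun.coeFn_star φ]
    with x hstar hmul hφ
  rw [hstar, hmul, Pi.mul_apply, Pi.mul_apply, hφ, Pi.star_apply, norm_mul, norm_mul, norm_star]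

theorem mulOp_star_domain (φ : X →ₘ[μ] 𝕜) : (mulOp (star φ)).domain = (mulOp φ).domain := by
  ext f
  have hnorm := ae_norm_star_mul_apply φ f
  exact ⟨fun hf => Lp.mem_Lp_of_ae_le (g := ⟨_, hf⟩) (hnorm.mono fun _ => Eq.ge),
    fun hf => Lp.mem_Lp_of_ae_le (g := ⟨_, hf⟩) (hnorm.mono fun _ => Eq.le)⟩

theorem star_mul_damp_of_mem_adjoint_domain (φ : X →ₘ[μ] 𝕜) (f : (mulOp φ)†.domain) :
    star φ * damp φ f = (damp φ ((mulOp φ)† f) : X →ₘ[μ] 𝕜) := by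
  have hdamp : damp φ f ∈ (mulOp (star φ)).domain :=
    mulOp_star_domain φ ▸ damp_mem_mulOp_domain φ f
  refine congrArg Subtype.val (a₁ := mulOp (star φ) ⟨_, hdamp⟩) <|
    (dense_mulOp_domain φ).eq_of_inner_left 𝕜 fun u hu => ?_
  let u' : (mulOp φ).domain := ⟨damp φ u, damp_mem_mulOp_domain φ u⟩
  have hcomm : damp φ (mulOp φ ⟨u, hu⟩) = mulOp φ u' := Subtype.ext (mul_left_comm _ _ _)
  calc ⟪mulOp (star φ) ⟨_, hdamp⟩, u⟫_𝕜
      = ⟪damp φ f, mulOp φ ⟨u, hu⟩⟫_𝕜 := isFormalAdjoint_mulOp φ _ ⟨u, hu⟩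
    _ = ⟪(f : Lp 𝕜 2 μ), mulOp φ u'⟫_𝕜 := by rw [inner_damp, hcomm]
    _ = ⟪(mulOp φ)† f, damp φ u⟫_𝕜 := (adjoint_isFormalAdjoint (dense_mulOp_domain φ) f u').symm
    _ = ⟪damp φ ((mulOp φ)† f), u⟫_𝕜 := (inner_damp _ _ _).symm

theorem adjoint_mulOp (φ : X →ₘ[μ] 𝕜) : (mulOp φ)† = mulOp (star φ) := by
  refine le_antisymm (le_of_le_graph ?_)
    (IsFormalAdjoint.le_adjoint (dense_mulOp_domain φ) (isFormalAdjoint_mulOp φ).symm)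
  rintro ⟨f, g⟩ hfg
  obtain ⟨f, rfl, rfl⟩ := (mem_graph_iff _).1 hfg
  exact mk_mem_mulOp_graph <| damping_mul_cancel (φ := φ) <|
    (mul_left_comm _ _ _).trans (star_mul_damp_of_mem_adjoint_domain φ f)

theorem isNormalPMap_mulOp (φ : X →ₘ[μ] ℂ) : IsNormalPMap (mulOp φ) where
  dense := dense_mulOp_domain φ
  dom_eq := by rw [adjoint_mulOp, mulOp_star_domain]
  norm_eq f hf := by
    have hadj := (adjoint_mulOp φ).le.2 (x := ⟨f, adjoint_mulOp φ ▸ mulOp_star_domain φ ▸ hf⟩)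
      (y := ⟨f, mulOp_star_domain φ ▸ hf⟩) rfl
    rw [hadj, Lp.norm_def, Lp.norm_def]
    exact congrArg ENNReal.toReal (eLpNorm_congr_norm_ae (ae_norm_star_mul_apply φ f)).symm

end MultiplicationOperator

section Moments

open LinearPMap MeasureTheory Filter Finset AddCircle
open scoped InnerProductSpace ENNReal ComplexConjugate

/-- `c` is a Stieltjes moment sequence: the sequence of moments of a positive measure on the
half-line `[0, ∞)`. -/
def IsStieltjesMoment (c : ℕ → ℝ) : Prop :=
  ∃ ν : Measure ℝ, (∀ᵐ t ∂ν, 0 ≤ t) ∧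
    ∀ n : ℕ, Integrable (fun t => t ^ n) ν ∧ ∫ t, t ^ n ∂ν = c n

theorem isStieltjesMoment_of_lintegral {c : ℕ → ℝ} {ν : Measure ℝ} (hc : ∀ n, 0 ≤ c n)
    (hν : ∀ᵐ t ∂ν, 0 ≤ t) (h : ∀ n : ℕ, ∫⁻ t, ENNReal.ofReal (t ^ n) ∂ν = ENNReal.ofReal (c n)) :
    IsStieltjesMoment c := by
  refine ⟨ν, hν, fun n => ?_⟩
  have hpow : 0 ≤ᵐ[ν] fun t => t ^ n := hν.mono fun t ht => pow_nonneg ht n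
  refine ⟨(lintegral_ofReal_ne_top_iff_integrable (by fun_prop) hpow).1 (by simp [h]), ?_⟩
  rw [integral_eq_lintegral_of_nonneg_ae hpow (by fun_prop), h, ENNReal.toReal_ofReal (hc n)]

theorem IsStieltjesMoment.const_mul {c : ℕ → ℝ} {r : ℝ} (hr : 0 ≤ r) (hc : IsStieltjesMoment c) :
    IsStieltjesMoment fun n => r * c n := by
  obtain ⟨ν, hν, hmom⟩ := hc
  refine ⟨ENNReal.ofReal r • ν, Measure.ae_smul_measure hν _, fun n => ⟨?_, ?_⟩⟩
  · exact (hmom n).1.smul_measure ENNReal.ofReal_ne_top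
  · rw [integral_smul_measure, (hmom n).2, ENNReal.toReal_ofReal hr, smul_eq_mul]

theorem isStieltjesMoment_factorial : IsStieltjesMoment fun n => n.factorial := by
  refine isStieltjesMoment_of_lintegral (ν := (volume.restrict (Set.Ioi 0)).withDensity
    fun t => ENNReal.ofReal (Real.exp (-t))) (fun n => by positivity) ?_ fun n => ?_
  · refine (withDensity_absolutelyContinuous _ _).ae_le ?_
    filter_upwards [ae_restrict_mem measurableSet_Ioi] with t ht using le_of_lt ht
  have hn : (0 : ℝ) < n + 1 := by positivity
  have hpos : ∀ᵐ t ∂volume.restrict (Set.Ioi (0 : ℝ)), 0 ≤ Real.exp (-t) * t ^ (n + 1 - 1 : ℝ) := by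
    filter_upwards [ae_restrict_mem measurableSet_Ioi] with t ht
    have : (0 : ℝ) < t := ht
    positivity
  rw [← Real.Gamma_nat_eq_factorial, Real.Gamma_eq_integral hn,
    ofReal_integral_eq_lintegral_ofReal (Real.GammaIntegral_convergent hn) hpos,
    lintegral_withDensity_eq_lintegral_mul _ (by fun_prop) (by fun_prop)]
  refine lintegral_congr fun t => ?_
  rw [Pi.mul_apply, ← ENNReal.ofReal_mul (Real.exp_pos _).le, add_sub_cancel_right,
    Real.rpow_natCast]

theorem isStieltjesMoment_of_hasSum {κ : Type*} {c : ℕ → ℝ} {w t : κ → ℝ} (hw : ∀ k, 0 ≤ w k)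
    (ht : ∀ k, 0 ≤ t k) (h : ∀ n, HasSum (fun k => w k * t k ^ n) (c n)) :
    IsStieltjesMoment c := by
  have hterm (n : ℕ) (k : κ) : 0 ≤ w k * t k ^ n := mul_nonneg (hw k) (pow_nonneg (ht k) n)
  refine isStieltjesMoment_of_lintegral
    (ν := Measure.sum fun k => ENNReal.ofReal (w k) • Measure.dirac (t k))
    (fun n => (h n).nonneg (hterm n)) ?_ fun n => ?_
  · rw [Measure.ae_sum_iff' measurableSet_Ici]
    exact fun k => Measure.ae_smul_measure ((ae_dirac_iff measurableSet_Ici).2 (ht k)) _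
  · rw [lintegral_sum_measure, ← (h n).tsum_eq,
      ENNReal.ofReal_tsum_of_nonneg (hterm n) (h n).summable]
    refine tsum_congr fun k => ?_
    rw [lintegral_smul_measure, lintegral_dirac, ENNReal.ofReal_mul (hw k), smul_eq_mul]

theorem isStieltjesMoment_prod_of_hasSum_succ {κ : Type*} {b : ℕ → ℝ} {w t : κ → ℝ}
    (hw : ∀ k, 0 ≤ w k) (ht : ∀ k, 0 ≤ t k) (hsum : Summable w) (hne : w ≠ 0)
    (hrec : ∀ n m, HasSum (fun k => w k * t k ^ n) m →
      HasSum (fun k => w k * t k ^ (n + 1)) (b n * m)) :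
    IsStieltjesMoment fun n => ∏ i ∈ range n, b i := by
  have hmass : 0 < ∑' k, w k := by
    obtain ⟨k, hk⟩ := Function.ne_iff.1 hne
    exact hsum.tsum_pos hw k ((hw k).lt_of_ne' hk)
  have hmom (n : ℕ) : HasSum (fun k => w k * t k ^ n) ((∑' k, w k) * ∏ i ∈ range n, b i) := by
    induction n with
    | zero => simpa only [pow_zero, mul_one, range_zero, prod_empty] using hsum.hasSum
    | succ n ih =>
      rw [prod_range_succ, mul_comm _ (b n), mul_left_comm]
      exact hrec n _ ih
  simpa only [inv_mul_cancel_left₀ hmass.ne'] using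
    (isStieltjesMoment_of_hasSum hw ht hmom).const_mul (inv_nonneg.2 hmass.le)

/-- The rotation-invariant measure on `ℂ` for which `ν` is the distribution of `|z| ^ 2`. -/
def radialMeasure (ν : Measure ℝ) : Measure ℂ :=
  ((haarAddCircle (T := 1)).prod ν).map fun p => fourier 1 p.1 * (√p.2 : ℂ)

theorem memLp_pow_radialMeasure {ν : Measure ℝ} [SFinite ν] {n : ℕ} (hν : ∀ᵐ t ∂ν, 0 ≤ t)
    (hn : Integrable (fun t => t ^ n) ν) : MemLp (fun z => z ^ n) 2 (radialMeasure ν) := by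
  rw [radialMeasure, memLp_map_measure_iff (by fun_prop) (by fun_prop),
    memLp_two_iff_integrable_sq_norm (by fun_prop)]
  refine (hn.comp_snd _).congr ?_
  filter_upwards [Measure.quasiMeasurePreserving_snd.ae hν] with p hp
  have hnorm : ‖fourier 1 p.1‖ = 1 := by rw [fourier_apply, Circle.norm_coe]
  rw [Function.comp_apply, norm_pow, norm_mul, hnorm, one_mul, Complex.norm_real,
    Real.norm_of_nonneg (Real.sqrt_nonneg _), ← pow_mul', pow_mul, Real.sq_sqrt hp]

theorem fourier_one_pow (x : UnitAddCircle) (n : ℕ) : fourier 1 x ^ n = fourier n x := by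
  rw [fourier_apply, fourier_apply, one_zsmul, natCast_zsmul, toCircle_nsmul, Circle.coe_pow]

theorem integral_conj_pow_mul_pow_radialMeasure {ν : Measure ℝ} [SFinite ν]
    (hν : ∀ᵐ t ∂ν, 0 ≤ t) (m n : ℕ) :
    ∫ z, conj (z ^ m) * z ^ n ∂radialMeasure ν
      = if m = n then ((∫ t, t ^ n ∂ν : ℝ) : ℂ) else 0 := by
  have hpolar (x : UnitAddCircle) (t : ℝ) :
      conj ((fourier 1 x * (√t : ℂ)) ^ m) * (fourier 1 x * (√t : ℂ)) ^ n
        = fourier (-m) x • fourier n x * ((√t ^ (m + n) : ℝ) : ℂ) := by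
    rw [mul_pow, mul_pow, map_mul, fourier_one_pow, fourier_one_pow, ← fourier_neg, map_pow,
      Complex.conj_ofReal, smul_eq_mul]
    push_cast
    ring
  have hangular : ∫ x : UnitAddCircle, fourier (-m) x • fourier n x ∂haarAddCircle
      = if m = n then 1 else 0 := by
    have h := congrFun (fourierCoeff_fourier (T := 1) n) m
    exact h.trans (by simp only [Pi.single_apply, Nat.cast_inj])
  have hradial : ∫ t, √t ^ (n + n) ∂ν = ∫ t, t ^ n ∂ν := by
    refine integral_congr_ae (hν.mono fun t ht => ?_)
    beta_reduce
    rw [← two_mul, pow_mul, Real.sq_sqrt ht]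
  rw [radialMeasure, integral_map (by fun_prop) (by fun_prop)]
  simp only [hpolar]
  rw [integral_prod_mul (fun x : UnitAddCircle => fourier (-m) x • fourier n x)
    (fun t : ℝ => ((√t ^ (m + n) : ℝ) : ℂ)), hangular, ite_mul, one_mul, zero_mul,
    integral_complex_ofReal]
  split_ifs with hmn
  · rw [hmn, hradial]
  · rfl

variable {E : Type*} [NormedAddCommGroup E] [InnerProductSpace ℂ E] {e : HilbertBasis ℕ ℂ E}
  {a : ℕ → ℝ} {T : E →ₗ.[ℂ] E}

theorem IsWeightedShift.exists_extendsVia_mulOp {X : Type*} [MeasurableSpace X] {μ : Measure X}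
    {φ : X → ℂ} (hT : IsWeightedShift e (fun n => (a n : ℂ)) T) (ha : ∀ n, 0 < a n)
    (hφ : AEStronglyMeasurable φ μ) (hLp : ∀ n : ℕ, MemLp (fun x => φ x ^ n) 2 μ)
    (hinner : ∀ m n : ℕ, ∫ x, conj (φ x ^ m) * φ x ^ n ∂μ
      = if m = n then ((∏ i ∈ range n, a i ^ 2 : ℝ) : ℂ) else 0) :
    ∃ ι : E →ₗᵢ[ℂ] Lp ℂ 2 μ, ExtendsVia ι T (mulOp (AEEqFun.mk φ hφ)) := by
  let v (n : ℕ) : Lp ℂ 2 μ := (hLp n).toLp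
  have hinner' (m n : ℕ) :
      ⟪v m, v n⟫_ℂ = if m = n then ((∏ i ∈ range n, a i ^ 2 : ℝ) : ℂ) else 0 := by
    rw [← hinner, L2.inner_def]
    refine integral_congr_ae ?_
    filter_upwards [(hLp m).coeFn_toLp, (hLp n).coeFn_toLp] with x hm hn
    rw [hm, hn, RCLike.inner_apply']
  have hnorm (n : ℕ) : ‖v n‖ = ∏ i ∈ range n, a i := by
    refine (pow_left_inj₀ (norm_nonneg _) (prod_nonneg fun i _ => (ha i).le) two_ne_zero).1 ?_
    rw [norm_sq_eq_re_inner (𝕜 := ℂ), hinner', if_pos rfl,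
      RCLike.re_eq_complex_re, Complex.ofReal_re, prod_pow]
  have hne (n : ℕ) : v n ≠ 0 := by
    rw [← norm_ne_zero_iff, hnorm]
    exact (prod_pos fun i _ => ha i).ne'
  have hgraph (n : ℕ) : (v n, v (n + 1)) ∈ (mulOp (AEEqFun.mk φ hφ)).graph := by
    refine mk_mem_mulOp_graph ((AEEqFun.mk_mul_mk _ _ _ _).trans ?_)
    exact AEEqFun.mk_eq_mk.2 (.of_forall fun x => (pow_succ' (φ x) n).symm)
  refine exists_extendsVia_of_orthogonal_orbit hT hne
    (fun m n hmn => (hinner' m n).trans (if_neg hmn)) (fun n => ?_) hgraph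
  rw [hnorm, hnorm, prod_range_succ, mul_comm]

theorem IsWeightedShift.nonempty_normalExtension_closure {E : Type u} [NormedAddCommGroup E]
    [InnerProductSpace ℂ E] {e : HilbertBasis ℕ ℂ E} {T : E →ₗ.[ℂ] E}
    (hT : IsWeightedShift e (fun n => (a n : ℂ)) T) (ha : ∀ n, 0 < a n)
    (hmom : IsStieltjesMoment fun n => ∏ i ∈ range n, a i ^ 2) :
    Nonempty (NormalExtension.{u, v} T.closure) := by
  obtain ⟨ν, hν, hmom⟩ := hmom
  have : IsFiniteMeasure ν := by simpa [integrable_const_iff] using (hmom 0).1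
  -- `ULift` moves the model into the universe in which the extension is sought.
  let up : ℂ ≃ᵐ ULift.{v} ℂ := MeasurableEquiv.ulift.symm
  have hφ : AEStronglyMeasurable (ULift.down : ULift.{v} ℂ → ℂ) ((radialMeasure ν).map up) :=
    MeasurableEquiv.ulift.measurable.aestronglyMeasurable
  obtain ⟨ι, hι⟩ := hT.exists_extendsVia_mulOp ha hφ
    (fun n => up.memLp_map_measure_iff.2 (memLp_pow_radialMeasure hν (hmom n).1))
    (fun m n => by
      rw [integral_map_equiv]
      exact (integral_conj_pow_mul_pow_radialMeasure hν m n).trans (by rw [(hmom n).2]))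
  have hN := isNormalPMap_mulOp (AEEqFun.mk _ hφ)
  exact ⟨⟨_, ι, _, hN, hι.closure hN.isClosed⟩⟩

theorem IsWeightedShift.exists_tight_starTight_normalExtension_closure {E : Type u}
    [NormedAddCommGroup E] [InnerProductSpace ℂ E] [CompleteSpace E] {e : HilbertBasis ℕ ℂ E}
    {T : E →ₗ.[ℂ] E} {b c : ℝ} (hT : IsWeightedShift e (fun n => (a n : ℂ)) T)
    (ha : ∀ n, 0 < a n) (hmom : IsStieltjesMoment fun n => ∏ i ∈ range n, a i ^ 2)
    (hgrowth : ∀ n, a (n + 1) ^ 2 ≤ b + c * a n ^ 2) :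
    (∃ N : NormalExtension.{u, v} T.closure, N.Tight ∧ N.StarTight) ∧
      T.closure.domain = T.closure†.domain := by
  obtain ⟨N⟩ := hT.nonempty_normalExtension_closure ha hmom
  have hclosable : T.IsClosable :=
    (N.ext.isClosable N.normal.isClosed).leIsClosable T.le_closure
  have hle : T.closure†.domain ≤ T.closure.domain :=
    hT.adjoint_closure_domain_le hclosable fun n => by
      simpa only [Complex.norm_real, Real.norm_eq_abs, sq_abs] using hgrowth n
  exact ⟨⟨N, N.tight_of_adjoint_domain_le hle, N.starTight_of_adjoint_domain_le hle⟩,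
    le_antisymm N.domain_le_adjoint_domain hle⟩

end Moments

section QNumbers

open Filter Finset Topology

theorem qNum_zero (q : ℝ) : qNum q 0 = 0 := by
  simp [qNum]

theorem qNum_succ (q : ℝ) (n : ℕ) : qNum q (n + 1) = 1 + q * qNum q n := by
  unfold qNum
  split_ifs with h
  · rw [h]
    push_cast
    ring
  · have : 1 - q ≠ 0 := sub_ne_zero.2 (Ne.symm h)
    field_simp
    ring

theorem qNum_nonneg {q : ℝ} (hq : 0 ≤ q) (n : ℕ) : 0 ≤ qNum q n := by
  induction n with
  | zero => rw [qNum_zero]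
  | succ n ih =>
    rw [qNum_succ]
    positivity

theorem qNum_succ_pos {q : ℝ} (hq : 0 ≤ q) (n : ℕ) : 0 < qNum q (n + 1) := by
  have := qNum_nonneg hq n
  rw [qNum_succ]
  positivity

theorem prod_qNum_one (n : ℕ) : ∏ i ∈ range n, qNum 1 (i + 1) = n.factorial := by
  simp only [qNum, if_true]
  exact_mod_cast prod_range_add_one_eq_factorial n

theorem summable_of_succ_eq_mul {f r : ℕ → ℝ} {l : ℝ} (hf : ∀ n, f (n + 1) = r n * f n)
    (hr : Tendsto r atTop (𝓝 l)) (hl : |l| < 1) : Summable f := by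
  obtain ⟨c, hlc, hc⟩ := exists_between hl
  refine summable_of_ratio_norm_eventually_le hc ?_
  filter_upwards [hr.abs.eventually_le_const hlc] with n hn
  rw [hf, norm_mul]
  gcongr
  exact hn

/-- The solution with value `1` at `0` of the recursion `w k * (1 + s * q ^ k) = q * w (k - 1)`.
For `s = -1` and `q < 1`, or `s = 1` and `1 < q`, these are the masses at `s * q ^ k / (q - 1)` of
a measure whose moments are proportional to the `q`-factorials. -/
def qWeight (q s : ℝ) : ℤ → ℝ
  | .ofNat k => ∏ j ∈ range k, q / (1 + s * q ^ (j + 1))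
  | .negSucc k => ∏ j ∈ range (k + 1), (1 + s * (q ^ j)⁻¹) / q

theorem qWeight_mul {q s : ℝ} (hq : q ≠ 0) (hs : ∀ j : ℕ, 1 + s * q ^ (j + 1) ≠ 0) (k : ℤ) :
    qWeight q s k * (1 + s * q ^ k) = q * qWeight q s (k - 1) := by
  rcases k with (_ | k) | k
  · have : (Int.ofNat 0 - 1 : ℤ) = .negSucc 0 := rfl
    rw [this]
    simp [qWeight, mul_div_cancel₀ _ hq]
  · have : (Int.ofNat (k + 1) - 1 : ℤ) = .ofNat k := by simp
    have hk := hs k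
    rw [this]
    simp only [qWeight, prod_range_succ, Int.ofNat_eq_natCast, zpow_natCast]
    field_simp
  · have : (Int.negSucc k - 1 : ℤ) = .negSucc (k + 1) := rfl
    rw [this]
    simp only [qWeight, prod_range_succ _ (k + 1), zpow_negSucc]
    rw [mul_left_comm, mul_div_cancel₀ _ hq]

-- Multiplying the recursion of `qWeight` by the `n`-th powers of the nodes, summing over `k` and
-- shifting `k` on the right shows that the `n`-th moment `m` and its successor `r` satisfy
-- `m + (q - 1) * r = q ^ (n + 1) * m`.
theorem hasSum_qWeight_mul_pow_succ {q s m : ℝ} {n : ℕ} (hq : q ≠ 0) (hq1 : q ≠ 1)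
    (hs : ∀ j : ℕ, 1 + s * q ^ (j + 1) ≠ 0)
    (hm : HasSum (fun k => qWeight q s k * (s * q ^ k / (q - 1)) ^ n) m) :
    HasSum (fun k => qWeight q s k * (s * q ^ k / (q - 1)) ^ (n + 1)) (qNum q (n + 1) * m) := by
  have hsub : q - 1 ≠ 0 := sub_ne_zero.2 hq1
  have hshift : HasSum (fun k => qWeight q s k * (1 + s * q ^ k) * (s * q ^ k / (q - 1)) ^ n)
      (q ^ (n + 1) * m) := by
    refine ((Equiv.subRight (1 : ℤ)).hasSum_iff.2 (hm.mul_left (q ^ (n + 1)))).congr_fun fun k => ?_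
    rw [Function.comp_apply, Equiv.subRight_apply, qWeight_mul hq hs]
    have hnode : s * q ^ k / (q - 1) = q * (s * q ^ (k - 1) / (q - 1)) := by
      rw [zpow_sub_one₀ hq]
      field_simp
    rw [hnode, mul_pow]
    ring
  have hval : qNum q (n + 1) * m = (q ^ (n + 1) * m - m) / (q - 1) := by
    rw [qNum, if_neg hq1, ← neg_div_neg_eq]
    ring
  rw [hval]
  refine ((hshift.sub hm).div_const (q - 1)).congr_fun fun k => ?_
  ring

theorem isStieltjesMoment_prod_qNum_of_summable {q s : ℝ} (hq : 0 < q) (hq1 : q ≠ 1)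
    (hs : ∀ j : ℕ, 1 + s * q ^ (j + 1) ≠ 0) (hnode : 0 ≤ s / (q - 1))
    (hw : ∀ k, 0 ≤ qWeight q s k) (hsum : Summable (qWeight q s)) :
    IsStieltjesMoment fun n => ∏ i ∈ range n, qNum q (i + 1) := by
  have hne : qWeight q s ≠ 0 := Function.ne_iff.2 ⟨0, by simp [qWeight]⟩
  refine isStieltjesMoment_prod_of_hasSum_succ hw (fun k => ?_) hsum hne
    fun n m hm => hasSum_qWeight_mul_pow_succ hq.ne' hq1 hs hm
  rw [mul_div_right_comm]
  positivity

theorem isStieltjesMoment_prod_qNum_of_lt_one {q : ℝ} (hq : 0 < q) (hq1 : q < 1) :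
    IsStieltjesMoment fun n => ∏ i ∈ range n, qNum q (i + 1) := by
  have hpos (j : ℕ) : 0 < 1 + -1 * q ^ (j + 1) := by
    have : q ^ (j + 1) < 1 := pow_lt_one₀ hq.le hq1 j.succ_ne_zero
    linarith
  have hneg (k : ℕ) : qWeight q (-1) (.negSucc k) = 0 :=
    prod_eq_zero (mem_range.2 k.succ_pos) (by simp)
  have hlim : Tendsto (fun n : ℕ => q / (1 + -1 * q ^ (n + 1))) atTop (𝓝 q) := by
    have hpow := (tendsto_pow_atTop_nhds_zero_of_lt_one hq.le hq1).comp (tendsto_add_atTop_nat 1)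
    simpa [Pi.div_def] using
      (tendsto_const_nhds (x := q)).div ((hpow.const_mul (-1)).const_add 1) (by simp)
  refine isStieltjesMoment_prod_qNum_of_summable hq hq1.ne (fun j => (hpos j).ne')
    (div_nonneg_of_nonpos (by norm_num) (by linarith)) ?_ (.of_nat_of_neg_add_one ?_ ?_)
  · rintro (k | k)
    · exact prod_nonneg fun j _ => div_nonneg hq.le (hpos j).le
    · exact (hneg k).ge
  · exact summable_of_succ_eq_mul (fun n => prod_range_succ_comm _ n) hlim
      (by rwa [abs_of_pos hq])
  · simpa only [← Int.negSucc_eq, hneg] using summable_zero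

theorem isStieltjesMoment_prod_qNum_of_one_lt {q : ℝ} (hq1 : 1 < q) :
    IsStieltjesMoment fun n => ∏ i ∈ range n, qNum q (i + 1) := by
  have hq : 0 < q := one_pos.trans hq1
  have hpow : Tendsto (fun n : ℕ => q ^ (n + 1)) atTop atTop :=
    (tendsto_pow_atTop_atTop_of_one_lt hq1).comp (tendsto_add_atTop_nat 1)
  refine isStieltjesMoment_prod_qNum_of_summable (s := 1) hq hq1.ne' (fun j => by positivity)
    (one_div_nonneg.2 (sub_nonneg.2 hq1.le)) ?_ (.of_nat_of_neg_add_one ?_ ?_)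
  · rintro (k | k) <;> exact prod_nonneg fun j _ => by positivity
  · refine summable_of_succ_eq_mul (fun n => prod_range_succ_comm _ n) (l := 0) ?_ (by simp)
    simpa using (tendsto_atTop_add_const_left _ 1 hpow).const_div_atTop q
  · simp only [← Int.negSucc_eq]
    refine summable_of_succ_eq_mul (fun n => prod_range_succ_comm _ (n + 1)) (l := q⁻¹) ?_
      (by rw [abs_of_pos (by positivity)]; exact inv_lt_one_of_one_lt₀ hq1)
    simpa using (hpow.inv_tendsto_atTop.const_add 1).div_const q

theorem isStieltjesMoment_prod_qNum {q : ℝ} (hq : 0 < q) :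
    IsStieltjesMoment fun n => ∏ i ∈ range n, qNum q (i + 1) := by
  rcases lt_trichotomy q 1 with h | rfl | h
  · exact isStieltjesMoment_prod_qNum_of_lt_one hq h
  · simpa only [prod_qNum_one] using isStieltjesMoment_factorial
  · exact isStieltjesMoment_prod_qNum_of_one_lt h

end QNumbers

/-- For `q > 0`, the closure `S` of the unilateral weighted shift
`e n ↦ √([n+1]_q) e (n+1)` (with domain the span of the orthonormal basis `(e n)`) is
subnormal and admits a normal extension which is both tight and `*`-tight; in particular
`dom S = dom S*`. -/
theorem stmt16 (q : ℝ) (hq : 0 < q) (e : HilbertBasis ℕ ℂ H) (S₀ : H →ₗ.[ℂ] H)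
    (hdom : S₀.domain = Submodule.span ℂ (Set.range (e : ℕ → H)))
    (hval : ∀ (n : ℕ) (hn : e n ∈ S₀.domain),
      S₀ ⟨e n, hn⟩ = ((Real.sqrt (qNum q (n + 1)) : ℝ) : ℂ) • e (n + 1))
    (S : H →ₗ.[ℂ] H) (hS : S = S₀.closure) :
    (∃ E : NormalExtension.{u, u} S, E.Tight ∧ E.StarTight) ∧
      S.domain = S.adjoint.domain := by
  subst hS
  have hS₀ : IsWeightedShift e (fun n => (√(qNum q (n + 1)) : ℂ)) S₀ := ⟨hdom, hval⟩
  have hsq (n : ℕ) : √(qNum q (n + 1)) ^ 2 = qNum q (n + 1) := Real.sq_sqrt (qNum_nonneg hq.le _)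
  refine hS₀.exists_tight_starTight_normalExtension_closure (b := 1) (c := q)
    (fun n => Real.sqrt_pos.2 (qNum_succ_pos hq.le n)) ?_ fun n => ?_
  · simpa only [hsq] using isStieltjesMoment_prod_qNum hq
  · rw [hsq, hsq]
    exact (qNum_succ q (n + 1)).le
end
end
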